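/- arXiv:1710.01563 — 2 statements merged into one kernel-verified Lean document; each statement's English description precedes it below -/
import Mathlib

section
/- Let q be an odd prime power and F a finite field with q elements, and let G = PSL₄(F) = SL(4,F)/center. Then G has a maximal subgroup H of odd index admitting a normal subgroup N ⊴ H of index 2 in H with N isomorphic to PSp₄(F) (the quotient of the symplectic group Sp(4,F) by its center), if and only if q ≡ 3 (mod 4). (Such an H is a group of shape PSp₄(q).2.) -/
open Polynomial Matrix

section SingerElement

variable {F : Type*} [Field F] {n : Type*} [Fintype n] [DecidableEq n]

/-- If `r` is an odd prime dividing `|F| ^ 2 + 1`, then every irreducible factor over `F` of the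
`r`-th cyclotomic polynomial has degree `4`. -/
theorem natDegree_eq_four_of_dvd_cyclotomic [Fintype F] {r : ℕ} (hr : r.Prime) (hr2 : r ≠ 2)
    (hrq : r ∣ Fintype.card F ^ 2 + 1) {f : F[X]} (hf : f ∣ cyclotomic r F)
    (hirr : Irreducible f) : f.natDegree = 4 := by
  have := Fact.mk hr
  obtain ⟨p, hp⟩ := CharP.exists F
  obtain ⟨m, hpp, hm⟩ := FiniteField.card F p
  have hneg : (Fintype.card F : ZMod r) ^ 2 = -1 := by
    have := (ZMod.natCast_eq_zero_iff _ _).2 hrq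
    push_cast at this
    exact eq_neg_of_add_eq_zero_left this
  have hcop : p.Coprime r := by
    rw [Nat.coprime_primes hpp hr]
    rintro rfl
    rw [hm] at hneg
    simp at hneg
  have := Fact.mk hpp
  have : Fact (2 < r) := ⟨lt_of_le_of_ne hr.two_le (Ne.symm hr2)⟩
  rw [natDegree_of_dvd_cyclotomic_of_irreducible (f := (m : ℕ))
    hm hcop hf hirr]
  refine orderOf_eq_prime_pow (p := 2) (n := 1) ?_ ?_
  · intro h
    have h' := congrArg Units.val h
    rw [pow_one, Units.val_pow_eq_pow_val, ZMod.coe_unitOfCoprime, ← hm, hneg] at h'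
    exact ZMod.neg_one_ne_one h'
  · ext
    rw [Units.val_pow_eq_pow_val, ZMod.coe_unitOfCoprime, ← hm,
      show 2 ^ (1 + 1) = 2 * 2 from rfl, pow_mul, hneg]
    simp

/-- A `4 × 4` matrix of odd prime order dividing `|F| ^ 2 + 1` has an irreducible minimal
polynomial of degree `4`. -/
theorem Matrix.irreducible_minpoly_of_pow_prime_eq_one [Fintype F] (hn : Fintype.card n = 4) {r : ℕ}
    (hr : r.Prime) (hr2 : r ≠ 2) (hrq : r ∣ Fintype.card F ^ 2 + 1) {y : Matrix n n F}
    (hy : y ^ r = 1) (hy1 : y ≠ 1) :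
    Irreducible (minpoly F y) ∧ (minpoly F y).natDegree = 4 := by
  have hy_int : IsIntegral F y := Algebra.IsIntegral.isIntegral y
  have hdvd : minpoly F y ∣ (X - 1) * cyclotomic r F := by
    apply minpoly.dvd
    rw [mul_comm, cyclotomic_prime_mul_X_sub_one F r (hn := ⟨hr⟩)]
    simp [hy]
  have hnc : ¬ IsCoprime (minpoly F y) (cyclotomic r F) := fun h => by
    have h1 := h.dvd_of_dvd_mul_right hdvd
    have h2 := Polynomial.aeval_eq_zero_of_dvd_aeval_eq_zero h1 (minpoly.aeval F y)
    rw [map_sub, aeval_X, map_one, sub_eq_zero] at h2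
    exact hy1 h2
  obtain ⟨f, hirr, hf1, hf2⟩ : ∃ f, Irreducible f ∧ f ∣ minpoly F y ∧ f ∣ cyclotomic r F := by
    by_contra! h
    exact hnc (isCoprime_of_irreducible_dvd (fun h => minpoly.ne_zero hy_int h.1) h)
  have hdeg := natDegree_eq_four_of_dvd_cyclotomic hr hr2 hrq hf2 hirr
  have hle : (minpoly F y).natDegree ≤ 4 := by
    rw [← hn, ← Matrix.charpoly_natDegree_eq_dim y]
    exact natDegree_le_of_dvd (Matrix.minpoly_dvd_charpoly y) (Matrix.charpoly_monic y).ne_zero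
  have hassoc : Associated f (minpoly F y) :=
    associated_of_dvd_of_natDegree_le hf1 (minpoly.ne_zero hy_int) (by omega)
  exact ⟨hassoc.irreducible hirr, by rw [← hdeg, natDegree_eq_of_degree_eq
    (degree_eq_degree_of_associated hassoc)]⟩

/-- A field embedded in a matrix algebra with degree the size of the matrices is its own
centralizer. -/
theorem Matrix.mem_range_of_commute_field {L : Type*} [Field L] [Algebra F L]
    (φ : L →ₐ[F] Matrix n n F) [Nonempty n] (hL : Module.finrank F L = Fintype.card n)
    {u : Matrix n n F} (hu : ∀ k, Commute u (φ k)) : ∃ k, φ k = u := by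
  have : FiniteDimensional F L := Module.finite_of_finrank_pos (by rw [hL]; exact Fintype.card_pos)
  obtain ⟨v, hv⟩ := exists_ne (0 : n → F)
  let ψ : L →ₗ[F] (n → F) :=
    { toFun := fun k => φ k *ᵥ v
      map_add' := fun a b => by rw [map_add, add_mulVec]
      map_smul' := fun a b => by rw [map_smul, smul_mulVec, RingHom.id_apply] }
  have hψ : Function.Injective ψ := by
    rw [injective_iff_map_eq_zero]
    intro k hk
    by_contra hk0
    apply hv
    have : φ k⁻¹ *ᵥ (φ k *ᵥ v) = v := by
      rw [mulVec_mulVec, ← map_mul, inv_mul_cancel₀ hk0, map_one, one_mulVec]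
    rw [← this, show φ k *ᵥ v = 0 from hk, mulVec_zero]
  have hsurj : Function.Surjective ψ :=
    (LinearMap.injective_iff_surjective_of_finrank_eq_finrank
      (by rw [hL, Module.finrank_fintype_fun_eq_card])).1 hψ
  obtain ⟨k, hk⟩ := hsurj (u *ᵥ v)
  refine ⟨k, Matrix.ext_of_mulVec_single fun i => ?_⟩
  obtain ⟨l, hl⟩ := hsurj (Pi.single i 1)
  rw [← hl]
  change φ k *ᵥ (φ l *ᵥ v) = u *ᵥ (φ l *ᵥ v)
  rw [mulVec_mulVec, mulVec_mulVec, (hu l).eq, ← map_mul, mul_comm, map_mul,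
    ← mulVec_mulVec, ← mulVec_mulVec]
  exact congrArg _ hk

/-- The centralizer of a matrix `y` with irreducible minimal polynomial of maximal degree is a
copy of the field `F[X] / (minpoly F y)`. -/
theorem Matrix.exists_algHom_of_commute {y : Matrix n n F} [Fact (Irreducible (minpoly F y))]
    [Nonempty n]
    (hdeg : (minpoly F y).natDegree = Fintype.card n) :
    ∃ φ : AdjoinRoot (minpoly F y) →ₐ[F] Matrix n n F, φ (AdjoinRoot.root _) = y ∧
      ∀ u, Commute u y → ∃ k, φ k = u := by
  let φ : AdjoinRoot (minpoly F y) →ₐ[F] Matrix n n F :=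
    Ideal.Quotient.liftₐ _ (aeval y) fun p hp => by
      rw [Ideal.mem_span_singleton] at hp
      exact Polynomial.aeval_eq_zero_of_dvd_aeval_eq_zero hp (minpoly.aeval F y)
  have hφ : ∀ p : F[X], φ (AdjoinRoot.mk _ p) = aeval y p := fun p => rfl
  refine ⟨φ, by rw [← AdjoinRoot.mk_X, hφ, aeval_X], fun u hu => ?_⟩
  refine Matrix.mem_range_of_commute_field φ ?_ fun k => ?_
  · rw [← hdeg]
    exact (AdjoinRoot.powerBasis (Irreducible.ne_zero Fact.out)).finrank
  · obtain ⟨p, rfl⟩ := AdjoinRoot.mk_surjective k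
    rw [hφ]
    induction p using Polynomial.induction_on' with
    | add p q hp hq => rw [map_add]; exact hp.add_right hq
    | monomial m a =>
      rw [aeval_monomial]
      exact Commute.mul_right (Algebra.commutes a u).symm (hu.pow_right m)

theorem Matrix.commute_of_commute_of_irreducible_minpoly {y : Matrix n n F} [Nonempty n]
    (hirr : Irreducible (minpoly F y)) (hdeg : (minpoly F y).natDegree = Fintype.card n)
    {u v : Matrix n n F} (hu : Commute u y) (hv : Commute v y) : Commute u v := by
  have := Fact.mk hirr
  obtain ⟨φ, -, hφ⟩ := Matrix.exists_algHom_of_commute hdeg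
  obtain ⟨k, rfl⟩ := hφ u hu
  obtain ⟨l, rfl⟩ := hφ v hv
  exact (Commute.all k l).map φ

/-- At most `n` conjugates of a matrix with irreducible characteristic polynomial commute
with it. -/
theorem Matrix.exists_finset_conj_of_commute {y : Matrix n n F} [Nonempty n]
    (hirr : Irreducible (minpoly F y)) (hdeg : (minpoly F y).natDegree = Fintype.card n) :
    ∃ s : Finset (Matrix n n F), s.card ≤ Fintype.card n ∧
      ∀ g g' : Matrix n n F, g * g' = 1 → Commute (g * y * g') y → g * y * g' ∈ s := by
  classical
  have := Fact.mk hirr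
  obtain ⟨φ, hy, hφ⟩ := Matrix.exists_algHom_of_commute hdeg
  refine ⟨((minpoly F y).rootSet (AdjoinRoot (minpoly F y))).toFinset.image φ, ?_, ?_⟩
  · refine Finset.card_image_le.trans ?_
    rw [← hdeg, Set.toFinset_card, ← Nat.card_eq_fintype_card, Nat.card_coe_set_eq]
    exact Polynomial.ncard_rootSet_le _ _
  · intro g g' hg hc
    obtain ⟨k, hk⟩ := hφ _ hc
    rw [← hk]
    refine Finset.mem_image_of_mem _ ?_
    rw [Set.mem_toFinset, mem_rootSet]
    have hinj : Function.Injective φ := φ.toRingHom.injective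
    refine ⟨hirr.ne_zero, hinj ?_⟩
    have hg' : g' * g = 1 := mul_eq_one_comm.1 hg
    let U : (Matrix n n F)ˣ := ⟨g, g', hg, hg'⟩
    have : g * y * g' = MulSemiringAction.toAlgHom F (Matrix n n F) (ConjAct.toConjAct U) y := by
      rw [MulSemiringAction.toAlgHom_apply, ConjAct.units_smul_def]
      rfl
    rw [← aeval_algHom_apply, hk, this, aeval_algHom_apply, minpoly.aeval, map_zero, map_zero]

/-- When `-1` is a square, a matrix of determinant one in size four, commuting with `y`
and squaring to a scalar, is a scalar. -/
theorem Matrix.eq_smul_one_of_sq_eq_smul_one [Fintype F] (hn : Fintype.card n = 4)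
    {y : Matrix n n F}
    (hirr : Irreducible (minpoly F y)) (hdeg : (minpoly F y).natDegree = 4)
    (hF : Fintype.card F % 4 = 1)
    {u : Matrix n n F} (hu : Commute u y) {s : F} (hs : u ^ 2 = s • 1) (hdet : u.det = 1) :
    ∃ t : F, u = t • 1 := by
  have := Fact.mk hirr
  have : Nonempty n := Fintype.card_pos_iff.1 (by omega)
  obtain ⟨φ, -, hφ⟩ := Matrix.exists_algHom_of_commute (y := y) (by rw [hdeg, hn])
  obtain ⟨k, rfl⟩ := hφ u hu
  by_contra! hns
  have hinj : Function.Injective φ := φ.toRingHom.injective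
  have hsq : ∀ t : F, s ≠ t ^ 2 := by
    rintro t rfl
    have h1 : (k - algebraMap F _ t) * (k + algebraMap F _ t) = 0 := by
      apply hinj
      rw [map_mul, map_sub, map_add, AlgHom.commutes, map_zero, Algebra.algebraMap_eq_smul_one,
        sub_mul, mul_add, mul_add, ← sq, hs]
      simp [smul_smul, sq]
      abel
    rcases mul_eq_zero.1 h1 with h | h
    · exact hns t (by rw [sub_eq_zero.1 h, AlgHom.commutes, Algebra.algebraMap_eq_smul_one])
    · refine hns (-t) ?_
      rw [eq_neg_of_add_eq_zero_left h, map_neg, AlgHom.commutes, Algebra.algebraMap_eq_smul_one,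
        neg_smul]
  have hirr2 : Irreducible (X ^ 2 - C s) := by
    refine (X_pow_sub_C_irreducible_iff_of_prime Nat.prime_two).2 fun b hb => hsq b hb.symm
  have hchar : (φ k).charpoly ∣ (X ^ 2 - C s) ^ 4 := by
    refine ⟨(-φ k).charpoly, ?_⟩
    rw [Matrix.charpoly, Matrix.charpoly, ← det_mul]
    have : (charmatrix (φ k)) * charmatrix (-φ k) = (X ^ 2 - C s) • 1 := by
      rw [charmatrix, charmatrix]
      have h2 : (C.mapMatrix (φ k)) ^ 2 = C s • (1 : Matrix n n F[X]) := by
        rw [← map_pow, hs]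
        ext i j
        simp [Matrix.one_apply, apply_ite (C : F → F[X])]
      rw [map_neg, sub_neg_eq_add, sub_mul, mul_add, mul_add, ← sq (C.mapMatrix (φ k)), h2,
        (Matrix.scalar_commute X (fun r' => Commute.all _ _) (C.mapMatrix (φ k))).eq]
      rw [← map_mul]
      refine Matrix.ext fun i j => ?_
      by_cases hij : i = j <;> simp [Matrix.scalar_apply, hij, sq]
      ring
    rw [this, det_smul, hn]
    simp
  obtain ⟨i, -, hi⟩ := (dvd_prime_pow hirr2.prime 4).1 hchar
  have heq : (φ k).charpoly = (X ^ 2 - C s) ^ i :=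
    eq_of_monic_of_associated (charpoly_monic _)
      ((monic_X_pow_sub_C s two_ne_zero).pow i) hi
  have hi2 : i = 2 := by
    have := congrArg natDegree heq
    rw [charpoly_natDegree_eq_dim, natDegree_pow, natDegree_X_pow_sub_C, hn] at this
    omega
  have hd : s ^ 2 = 1 := by
    rw [← hdet, Matrix.det_eq_sign_charpoly_coeff, heq, hi2, hn, coeff_zero_eq_eval_zero]
    simp [(by decide : Even 4).neg_one_pow]
  obtain ⟨i, hi⟩ : IsSquare (-1 : F) := FiniteField.isSquare_neg_one_iff.2 (by omega)
  rcases (sq_eq_sq_iff_eq_or_eq_neg.1 (hd.trans (one_pow 2).symm)) with h | h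
  · exact hsq 1 (by rw [h, one_pow])
  · exact hsq i (by rw [h, hi, sq])

/-- The centralizer in `Sp(4, F)` of a symplectic matrix of odd prime order dividing
`|F| ^ 2 + 1` has order `|F| ^ 2 + 1`. -/
theorem SymplecticGroup.card_commute [Fintype F] {r : ℕ} (hr : r.Prime) (hr2 : r ≠ 2)
    (hrq : r ∣ Fintype.card F ^ 2 + 1) {y : Matrix (Fin 2 ⊕ Fin 2) (Fin 2 ⊕ Fin 2) F}
    (hyS : y ∈ symplecticGroup (Fin 2) F) (hy : y ^ r = 1) (hy1 : y ≠ 1) :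
    Nat.card {u : symplecticGroup (Fin 2) F //
      Commute (u : Matrix (Fin 2 ⊕ Fin 2) (Fin 2 ⊕ Fin 2) F) y} = Fintype.card F ^ 2 + 1 := by
  obtain ⟨hirr, hdeg⟩ := Matrix.irreducible_minpoly_of_pow_prime_eq_one (by simp) hr hr2 hrq hy hy1
  have := Fact.mk hirr
  obtain ⟨φ, hroot, hφ⟩ := Matrix.exists_algHom_of_commute (y := y) (by simp [hdeg])
  have hinj : Function.Injective φ := φ.toRingHom.injective
  set q := Fintype.card F with hq
  set L := AdjoinRoot (minpoly F y)
  let pb := AdjoinRoot.powerBasis hirr.ne_zero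
  have : FiniteDimensional F L := pb.finite
  have : Finite L := Module.finite_of_finite F
  have hcardL : Nat.card L = q ^ 4 := by
    rw [Module.natCard_eq_pow_finrank (K := F), pb.finrank, Nat.card_eq_fintype_card, ← hq]
    exact congrArg _ hdeg
  have hJ : J (Fin 2) F * J (Fin 2) F = -1 := J_squared _ _
  let θ : L →ₐ[F] Matrix (Fin 2 ⊕ Fin 2) (Fin 2 ⊕ Fin 2) F := AlgHom.ofLinearMap
    { toFun := fun k => -(J (Fin 2) F * (φ k)ᵀ * J (Fin 2) F)
      map_add' := fun a b => by
        rw [map_add, transpose_add, mul_add, add_mul, neg_add]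
      map_smul' := fun a b => by simp }
    (by simp [hJ])
    (fun a b => by
      change -(J (Fin 2) F * (φ (a * b))ᵀ * J (Fin 2) F) =
        -(J (Fin 2) F * (φ a)ᵀ * J (Fin 2) F) * -(J (Fin 2) F * (φ b)ᵀ * J (Fin 2) F)
      rw [mul_comm a b, map_mul, transpose_mul, neg_mul_neg]
      simp only [Matrix.mul_assoc]
      rw [← Matrix.mul_assoc (J (Fin 2) F) (J (Fin 2) F), hJ]
      simp)
  have hθ : ∀ k, θ k = -(J (Fin 2) F * (φ k)ᵀ * J (Fin 2) F) := fun k => rfl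
  let ψ : L →ₐ[F] L := (FiniteField.frobeniusAlgHom F L).comp (FiniteField.frobeniusAlgHom F L)
  have hψ : ∀ k, ψ k = k ^ q ^ 2 := fun k => by simp [ψ, ← pow_mul, sq, hq]
  have hθψ : θ = φ.comp ψ := by
    refine AdjoinRoot.algHom_ext ?_
    rw [hθ, AlgHom.comp_apply, hψ, map_pow, hroot]
    have h1 : -(J (Fin 2) F * yᵀ * J (Fin 2) F) * y = 1 := by
      rw [neg_mul]
      exact SymplecticGroup.inv_left_mul_aux hyS
    have h2 : y * y ^ q ^ 2 = 1 := by
      obtain ⟨c, hc⟩ := hrq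
      rw [← pow_succ', hc, pow_mul, hy, one_pow]
    exact left_inv_eq_right_inv h1 h2
  have hmem : ∀ k, φ k ∈ symplecticGroup (Fin 2) F ↔ k ^ (q ^ 2 + 1) = 1 := fun k => by
    have h1 : k ^ (q ^ 2 + 1) = 1 ↔ θ k * φ k = 1 := by
      rw [hθψ, AlgHom.comp_apply, ← map_mul, hψ, ← pow_succ, ← map_one φ, hinj.eq_iff]
    rw [h1, SymplecticGroup.mem_iff', hθ]
    constructor
    · intro h
      rw [neg_mul, Matrix.mul_assoc, Matrix.mul_assoc, ← Matrix.mul_assoc _ _ (φ k), h, hJ, neg_neg]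
    · intro h
      have := congrArg (J (Fin 2) F * ·) h
      simp only [neg_mul, Matrix.mul_assoc, mul_neg, mul_one] at this
      rw [← Matrix.mul_assoc (J (Fin 2) F) (J (Fin 2) F), hJ] at this
      simpa [Matrix.mul_assoc] using this
  have hker : Nat.card (powMonoidHom (q ^ 2 + 1) : Lˣ →* Lˣ).ker = q ^ 2 + 1 := by
    rw [IsCyclic.card_powMonoidHom_ker, Nat.card_units, hcardL]
    refine Nat.gcd_eq_right ⟨q ^ 2 - 1, ?_⟩
    rw [show q ^ 4 = (q ^ 2) ^ 2 by ring, ← Nat.sq_sub_sq, one_pow]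
  rw [← hker]
  symm
  refine Nat.card_eq_of_bijective (fun k => ⟨⟨φ (k : Lˣ), (hmem _).2 ?_⟩, ?_⟩) ⟨?_, ?_⟩
  · have := k.2
    rw [MonoidHom.mem_ker, powMonoidHom_apply] at this
    simpa using congrArg Units.val this
  · have h := (Commute.all ((k : Lˣ) : L) (AdjoinRoot.root _)).map φ
    rwa [hroot] at h
  · intro a b h
    exact Subtype.ext (Units.ext (hinj (congrArg (fun u => u.1.1) h)))
  · rintro ⟨⟨u, hu⟩, huy⟩
    obtain ⟨k, rfl⟩ := hφ u huy
    have hk := (hmem k).1 hu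
    refine ⟨⟨Units.ofPowEqOne k _ hk (by omega), ?_⟩, ?_⟩
    · rw [MonoidHom.mem_ker, powMonoidHom_apply]
      exact Units.pow_ofPowEqOne _ _
    · rfl

end SingerElement

section SymplecticForm

variable {l : Type*} [Fintype l] [DecidableEq l] {F : Type*} [Field F]

variable (l F) in
/-- The standard symplectic form, with Gram matrix `Matrix.J`. -/
noncomputable def symplecticForm : LinearMap.BilinForm F (l ⊕ l → F) := Matrix.toBilin' (J l F)

theorem symplecticForm_apply (x y : l ⊕ l → F) :
    symplecticForm l F x y = x ⬝ᵥ (J l F *ᵥ y) := Matrix.toBilin'_apply' _ _ _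

theorem symplecticForm_swap (x y : l ⊕ l → F) :
    symplecticForm l F x y = -symplecticForm l F y x := by
  rw [symplecticForm_apply, symplecticForm_apply, dotProduct_mulVec, ← mulVec_transpose,
    J_transpose, neg_mulVec, neg_dotProduct, dotProduct_comm]

theorem symplecticForm_self (x : l ⊕ l → F) : symplecticForm l F x x = 0 := by
  rw [symplecticForm_apply]
  simp [dotProduct, J, mulVec, fromBlocks, Matrix.one_apply, mul_comm]

theorem exists_symplecticForm_ne_zero {x : l ⊕ l → F} (hx : x ≠ 0) :
    ∃ y, symplecticForm l F x y ≠ 0 := by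
  by_contra! h
  refine hx (dotProduct_eq_zero_iff.1 fun w => ?_)
  have := h (-(J l F *ᵥ w))
  rwa [symplecticForm_apply, mulVec_neg, mulVec_mulVec, J_squared, neg_mulVec, one_mulVec,
    neg_neg] at this

theorem exists_symplecticForm_eq_one {x : l ⊕ l → F} (hx : x ≠ 0) :
    ∃ y, symplecticForm l F x y = 1 := by
  obtain ⟨y, hy⟩ := exists_symplecticForm_ne_zero hx
  exact ⟨(symplecticForm l F x y)⁻¹ • y, by simp [hy]⟩

theorem symplecticForm_mulVec (A : Matrix (l ⊕ l) (l ⊕ l) F) (x y : l ⊕ l → F) :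
    symplecticForm l F (A *ᵥ x) (A *ᵥ y) = x ⬝ᵥ ((Aᵀ * J l F * A) *ᵥ y) := by
  rw [symplecticForm_apply, ← vecMul_transpose, ← dotProduct_mulVec, mulVec_mulVec, mulVec_mulVec]

theorem mem_symplecticGroup_iff {A : Matrix (l ⊕ l) (l ⊕ l) F} :
    A ∈ symplecticGroup l F ↔ ∀ x y, symplecticForm l F (A *ᵥ x) (A *ᵥ y) =
      symplecticForm l F x y := by
  simp_rw [SymplecticGroup.mem_iff', symplecticForm_mulVec, symplecticForm_apply]
  refine ⟨fun h x y => by rw [h], fun h => Matrix.ext fun i j => ?_⟩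
  simpa using h (Pi.single i 1) (Pi.single j 1)

/-- The Gram matrix of the columns of `A`. -/
theorem transpose_mul_J_mul_apply (A : Matrix (l ⊕ l) (l ⊕ l) F) (i j : l ⊕ l) :
    (Aᵀ * J l F * A) i j = symplecticForm l F (A.col i) (A.col j) := by
  rw [← mulVec_single_one, ← mulVec_single_one, symplecticForm_mulVec]
  simp

theorem symplecticForm_single (i j : l ⊕ l) :
    symplecticForm l F (Pi.single i 1) (Pi.single j 1) = J l F i j := by
  rw [symplecticForm_apply]
  simp

end SymplecticForm

section CardSymplectic

variable {F : Type*} [Field F]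

theorem LinearMap.natCard_fiber_of_surjective [Finite F] {V W : Type*} [AddCommGroup V] [Module F V]
    [FiniteDimensional F V] [AddCommGroup W] [Module F W] {f : V →ₗ[F] W}
    (hf : Function.Surjective f) {k : ℕ}
    (hk : Module.finrank F W + k = Module.finrank F V) (w : W) :
    Nat.card {x // f x = w} = Nat.card F ^ k := by
  obtain ⟨x₀, rfl⟩ := hf w
  have e : {x // f x = f x₀} ≃ LinearMap.ker f :=
    (Equiv.subRight x₀).subtypeEquiv fun x => by simp [sub_eq_zero]
  rw [Nat.card_congr e, Module.natCard_eq_pow_finrank (K := F)]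
  have := f.finrank_range_add_finrank_ker
  rw [LinearMap.range_eq_top.2 hf, finrank_top] at this
  congr 1
  omega

local notation "V" => Fin 2 ⊕ Fin 2 → F
local notation "B" => symplecticForm (Fin 2) F

/-- A symplectic `4 × 4` matrix amounts to a symplectic basis, chosen vector by vector. -/
def symplecticGroupEquiv : symplecticGroup (Fin 2) F ≃
    Σ a : {a : V // a ≠ 0}, Σ b : {b : V // B a b = 1},
      Σ c : {c : V // c ≠ 0 ∧ B a c = 0 ∧ B b c = 0},
        {d : V // B a d = 0 ∧ B b d = 0 ∧ B c d = 1} := by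
  have hgram : ∀ A : symplecticGroup (Fin 2) F, ∀ i j, B (A.1.col i) (A.1.col j) =
      J (Fin 2) F i j := fun A i j => by
    rw [← transpose_mul_J_mul_apply, SymplecticGroup.mem_iff'.1 A.2]
  exact
  { toFun := fun A => ⟨⟨A.1.col (.inr 0), fun h => by
          simpa [h, J] using hgram A (.inr 0) (.inl 0)⟩,
        ⟨A.1.col (.inl 0), by simp [hgram, J]⟩,
        ⟨A.1.col (.inr 1), fun h => by simpa [h, J] using hgram A (.inr 1) (.inl 1),
          by simp [hgram, J], by simp [hgram, J]⟩,
        ⟨A.1.col (.inl 1), by simp [hgram, J], by simp [hgram, J], by simp [hgram, J]⟩⟩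
    invFun := fun p => ⟨(Matrix.of
      (Sum.elim ![p.2.1.1, p.2.2.2.1] ![p.1.1, p.2.2.1.1]))ᵀ, by
        obtain ⟨⟨a, ha⟩, ⟨b, hab⟩, ⟨c, hc, hac, hbc⟩, ⟨d, had, hbd, hcd⟩⟩ := p
        have hba := symplecticForm_swap b a
        have hca := symplecticForm_swap c a
        have hcb := symplecticForm_swap c b
        have hda := symplecticForm_swap d a
        have hdb := symplecticForm_swap d b
        have hdc := symplecticForm_swap d c
        dsimp only at hab hac hbc had hbd hcd
        simp only [hab, hac, hbc, had, hbd, hcd, neg_zero] at hba hca hcb hda hdb hdc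
        rw [SymplecticGroup.mem_iff']
        ext i j
        rw [transpose_mul_J_mul_apply]
        change B (Sum.elim ![b, d] ![a, c] i) (Sum.elim ![b, d] ![a, c] j) = _
        rcases i with i | i <;> rcases j with j | j <;> fin_cases i <;> fin_cases j <;>
          simp [J, symplecticForm_self, *]⟩
    left_inv := fun A => by
      ext i j
      rcases j with j | j <;> fin_cases j <;> rfl
    right_inv := fun p => by rfl }

theorem card_symplecticGroup [Fintype F] :
    Nat.card (symplecticGroup (Fin 2) F) =
      (Fintype.card F ^ 4 - 1) * (Fintype.card F ^ 3 *
        ((Fintype.card F ^ 2 - 1) * Fintype.card F)) := by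
  classical
  rw [Nat.card_congr symplecticGroupEquiv]
  have h4 : ∀ a b c : V, B a b = 1 → B a c = 0 → B b c = 0 → c ≠ 0 →
      Nat.card {d : V // B a d = 0 ∧ B b d = 0 ∧ B c d = 1} = Fintype.card F := by
    intro a b c hab hac hbc hc
    have hba : B b a = -1 := by rw [symplecticForm_swap, hab]
    have hca : B c a = 0 := by rw [symplecticForm_swap, hac, neg_zero]
    have hcb : B c b = 0 := by rw [symplecticForm_swap, hbc, neg_zero]
    obtain ⟨d, hd⟩ := exists_symplecticForm_eq_one hc
    have := LinearMap.natCard_fiber_of_surjective (f := (B a).prod ((B b).prod (B c))) (k := 1)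
      (fun ⟨s, t, u⟩ => ⟨(s - u * B a d) • b - (t - u * B b d) • a + u • d, by
        simp [hab, hba, hca, hcb, hd, symplecticForm_self]⟩) (by simp) (0, 0, 1)
    simpa using this
  have h3 : ∀ a b : V, B a b = 1 →
      Nat.card {c : V // c ≠ 0 ∧ B a c = 0 ∧ B b c = 0} = Fintype.card F ^ 2 - 1 := by
    intro a b hab
    have hba : B b a = -1 := by rw [symplecticForm_swap, hab]
    have := LinearMap.natCard_fiber_of_surjective (f := (B a).prod (B b)) (k := 2)
      (fun ⟨s, t⟩ => ⟨s • b - t • a, by simp [hab, hba, symplecticForm_self]⟩) (by simp) (0, 0)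
    rw [← Nat.card_eq_fintype_card, ← this]
    have e : {c : V // c ≠ 0 ∧ B a c = 0 ∧ B b c = 0} ≃
        {c : {c : V // (B a).prod (B b) c = (0, 0)} // c ≠ ⟨0, by simp⟩} :=
      ⟨fun c => ⟨⟨c.1, by simp [c.2.2]⟩, fun h => c.2.1 (congrArg Subtype.val h)⟩,
        fun c => ⟨c.1.1, fun h => c.2 (Subtype.ext h), by simpa using c.1.2⟩,
        fun _ => rfl, fun _ => rfl⟩
    rw [Nat.card_congr e, Nat.card_eq_fintype_card, Nat.card_eq_fintype_card,
      Fintype.card_subtype_compl, Fintype.card_subtype_eq]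
  have h2 : ∀ a : V, a ≠ 0 → Nat.card {b : V // B a b = 1} = Fintype.card F ^ 3 := by
    intro a ha
    obtain ⟨d, hd⟩ := exists_symplecticForm_eq_one ha
    have := LinearMap.natCard_fiber_of_surjective (f := B a) (k := 3)
      (fun s => ⟨s • d, by simp [hd]⟩) (by simp) 1
    simpa using this
  have h1 : Nat.card {a : V // a ≠ 0} = Fintype.card F ^ 4 - 1 := by
    rw [Nat.card_eq_fintype_card, Fintype.card_subtype_compl, Fintype.card_subtype_eq]
    simp
  rw [Nat.card_sigma, Finset.sum_congr rfl (g := fun _ => _) ?_, Finset.sum_const,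
    Finset.card_univ, ← Nat.card_eq_fintype_card, h1, smul_eq_mul]
  rintro a -
  rw [Nat.card_sigma, Finset.sum_congr rfl (g := fun _ => _) ?_, Finset.sum_const,
    Finset.card_univ, ← Nat.card_eq_fintype_card, h2 _ a.2, smul_eq_mul]
  rintro b -
  rw [Nat.card_sigma, Finset.sum_congr rfl (g := fun _ => _) ?_, Finset.sum_const,
    Finset.card_univ, ← Nat.card_eq_fintype_card, h3 _ _ b.2, smul_eq_mul]
  rintro c -
  exact h4 _ _ _ b.2 c.2.2.1 c.2.2.2 c.2.1

end CardSymplectic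

section CentralQuotient

variable {Γ Q : Type*} [Group Γ] [Group Q] {π : Γ →* Q} {r m : ℕ}

/-- Elements of order prime to the exponent of the centre lift to elements of the same order. -/
theorem exists_lift_pow_eq_one (hπ : Function.Surjective π) (hker : π.ker = Subgroup.center Γ)
    (hZ : ∀ z ∈ Subgroup.center Γ, z ^ m = 1) (hr : r.Coprime m) {x : Q} (hx : x ^ r = 1) :
    ∃ y : Γ, π y = x ∧ y ^ r = 1 := by
  obtain ⟨y, rfl⟩ := hπ x
  obtain ⟨k, hk1, hk0⟩ := Nat.chineseRemainder hr 1 0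
  refine ⟨y ^ k, ?_, ?_⟩
  · rw [map_pow, ← pow_one (π y), ← pow_mul, one_mul]
    exact pow_eq_pow_iff_modEq.2 (hk1.of_dvd (orderOf_dvd_of_pow_eq_one hx))
  · obtain ⟨d, rfl⟩ := Nat.modEq_zero_iff_dvd.1 hk0
    have hz := hZ (y ^ r) (by rw [← hker, MonoidHom.mem_ker, map_pow, hx])
    rw [← pow_mul, show m * d * r = r * m * d by ring, pow_mul, pow_mul, hz, one_pow]

/-- Commuting modulo the centre with an element of order prime to the exponent of the centre. -/
theorem commute_of_map_commute (hker : π.ker = Subgroup.center Γ)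
    (hZ : ∀ z ∈ Subgroup.center Γ, z ^ m = 1) (hr : r.Coprime m) {c y : Γ} (hy : y ^ r = 1)
    (h : Commute (π c) (π y)) : Commute c y := by
  have hz : c * y * c⁻¹ * y⁻¹ ∈ Subgroup.center Γ := by
    rw [← hker, MonoidHom.mem_ker]
    simp [h.eq]
  set z := c * y * c⁻¹ * y⁻¹ with hzdef
  have hzy : z * y = c * y * c⁻¹ := by simp [hzdef]
  have hzr : z ^ r = 1 := by
    have h1 : (z * y) ^ r = 1 := by rw [hzy, conj_pow, hy]; simp
    have hcz : Commute z y := (Subgroup.mem_center_iff.1 hz y).symm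
    rwa [hcz.mul_pow, hy, mul_one] at h1
  have hz1 : z = 1 := by
    rw [← orderOf_eq_one_iff, ← Nat.dvd_one, ← hr.gcd_eq_one]
    exact Nat.dvd_gcd (orderOf_dvd_of_pow_eq_one hzr) (orderOf_dvd_of_pow_eq_one (hZ z hz))
  rw [hz1, one_mul] at hzy
  exact (mul_inv_eq_iff_eq_mul.1 hzy.symm)

end CentralQuotient

section SylowFusion

variable {P : Type*} [Group P] {r : ℕ} [Fact r.Prime]

/-- If elements of order `r` have abelian centralizers of constant order and at most four of
their conjugates commute with them, a congruence on the order of the group forces four of them. -/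
theorem Sylow.exists_four_le_ncard_isConj [Finite P] {z c m : ℕ}
    (hcard : ∀ x : P, orderOf x = r → Nat.card (Subgroup.centralizer {x}) * z = c)
    (hcomm : ∀ x a b : P, orderOf x = r → Commute a x → Commute b x → Commute a b)
    (hconj : ∀ x : P, orderOf x = r → {x' | IsConj x x' ∧ Commute x' x}.ncard ≤ 4)
    (hP : Nat.card P * z = c * m) (hc : c ≠ 0) (hm : m ≡ 4 [MOD r]) (hr : 5 ≤ r)
    (hdvd : r ∣ Nat.card P) (R : Sylow r P) :
    ∃ x ∈ R, orderOf x = r ∧ (∀ y ∈ R, Commute y x) ∧ 4 ≤ {x' | x' ∈ R ∧ IsConj x x'}.ncard := by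
  have hRr : r ∣ Nat.card R := R.dvd_card_of_dvd_card hdvd
  have hRnt : Nontrivial R := (Finite.one_lt_card_iff_nontrivial).1
    ((Fact.out : r.Prime).one_lt.trans_le (Nat.le_of_dvd Nat.card_pos hRr))
  have hZnt : Nontrivial (Subgroup.center R) := R.isPGroup'.center_nontrivial
  obtain ⟨k, hk⟩ := (R.isPGroup'.to_subgroup (Subgroup.center R)).exists_card_eq
  have hZr : r ∣ Nat.card (Subgroup.center R) := by
    have h1 : 1 < Nat.card (Subgroup.center R) := Finite.one_lt_card
    rcases k with _ | k
    · rw [hk] at h1; simp at h1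
    · exact hk ▸ dvd_pow_self r k.succ_ne_zero
  obtain ⟨⟨⟨x, hxR⟩, hxZ⟩, hx⟩ := exists_prime_orderOf_dvd_card' r hZr
  replace hx : orderOf x = r := by simpa only [Subgroup.orderOf_mk] using hx
  have hxR' : ∀ y ∈ R, Commute y x := fun y hy => 
    congrArg Subtype.val (Subgroup.mem_center_iff.1 hxZ ⟨y, hy⟩)
  refine ⟨x, hxR, hx, hxR', ?_⟩
  set K := Subgroup.normalizer (R : Set P)
  have hRK : (R : Subgroup P) ≤ K := Subgroup.le_normalizer
  have hCK : Subgroup.centralizer {x} ≤ K := fun a ha => by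
    have hcom : ∀ y ∈ R, a * y * a⁻¹ = y := fun y hy => by
      rw [(hcomm x a y hx (Subgroup.mem_centralizer_singleton_iff.1 ha) (hxR' y hy)).eq,
        mul_inv_cancel_right]
    refine Subgroup.mem_set_normalizer_iff.2 fun y => ⟨fun hy => ?_, fun hy => ?_⟩
    · rw [hcom y hy]; exact hy
    · have := hcom _ hy
      have h2 : a * y * a⁻¹ = y := by
        have h3 := congrArg (fun t => a⁻¹ * t * a) this
        simpa [mul_assoc] using h3
      rwa [h2] at hy
  set x' : K := ⟨x, hRK hxR⟩
  set O := MulAction.orbit (ConjAct K) x'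
  have hcent : Nat.card (Subgroup.centralizer {x'}) = Nat.card (Subgroup.centralizer {x}) := by
    rw [← Nat.card_congr (Subgroup.subgroupOfEquivOfLe hCK).toEquiv]
    congr 2
    ext a
    simp [Subgroup.mem_subgroupOf, Subgroup.mem_centralizer_singleton_iff, x', Subtype.ext_iff]
  have hK : Nat.card (Subgroup.centralizer {x}) * O.ncard = Nat.card K := by
    rw [← hcent, Subgroup.nat_card_centralizer_nat_card_stabilizer, ← MulAction.index_stabilizer,
      Subgroup.card_mul_index]
    rfl
  have hOR : Subtype.val '' O ⊆ {y | y ∈ R ∧ IsConj x y} := by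
    rintro _ ⟨y, hy, rfl⟩
    obtain ⟨g, hg⟩ := isConj_iff.1 (ConjAct.mem_orbit_conjAct.1 hy).symm
    have hg' : (g : P) * x * (g : P)⁻¹ = y := congrArg Subtype.val hg
    refine ⟨?_, isConj_iff.2 ⟨g, hg'⟩⟩
    rw [← hg']
    exact (Subgroup.mem_set_normalizer_iff.1 g.2 x).1 hxR
  have hO4 : O.ncard ≤ 4 := by
    rw [← Set.ncard_image_of_injective O Subtype.val_injective]
    refine (Set.ncard_le_ncard (fun y hy => ?_) (Set.toFinite _)).trans (hconj x hx)
    exact ⟨(hOR hy).2, hxR' y (hOR hy).1⟩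
  have hmO : m = Nat.card (Sylow r P) * O.ncard := by
    refine Nat.eq_of_mul_eq_mul_left (Nat.pos_of_ne_zero hc) ?_
    rw [← hP, R.card_eq_index_normalizer, ← K.card_mul_index, ← hK, ← hcard x hx]
    ring
  have hmod : O.ncard ≡ 4 [MOD r] := by
    have h1 := (card_sylow_modEq_one r P).mul_right O.ncard
    rw [one_mul, ← hmO] at h1
    exact h1.symm.trans hm
  have hOeq : O.ncard = 4 := hmod.eq_of_lt_of_lt (by omega) (by omega)
  rw [← hOeq, ← Set.ncard_image_of_injective O Subtype.val_injective]
  exact Set.ncard_le_ncard hOR (Set.toFinite _)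

/-- Frattini argument: an index-two overgroup of `N` contains an involution centralizing an
element of order `r`, provided `N` already realises all the fusion of that element. -/
theorem exists_involution_commute_of_index_two {G : Type*} [Group G] [Finite G] {H : Subgroup G}
    {N : Subgroup H} [N.Normal] (hN : N.index = 2)
    (hconj : ∀ x : G, orderOf x = r → {x' | IsConj x x' ∧ Commute x' x}.ncard ≤ 4)
    (hfus : ∀ R : Sylow r N, ∃ x ∈ R, orderOf x = r ∧ (∀ y ∈ R, Commute y x) ∧
      4 ≤ {x' | x' ∈ R ∧ IsConj x x'}.ncard) :
    ∃ x u : G, orderOf x = r ∧ orderOf u = 2 ∧ Commute u x := by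
  obtain ⟨R⟩ : Nonempty (Sylow r N) := inferInstance
  obtain ⟨x, hxR, hx, hxc, hx4⟩ := hfus R
  have hfr := R.normalizer_sup_eq_top
  obtain ⟨h, hh, hhN⟩ : ∃ h ∈ Subgroup.normalizer ((R.map N.subtype : Subgroup H) : Set H),
      h ∉ N := by
    by_contra! hle
    rw [sup_eq_right.2 hle] at hfr
    rw [hfr, Subgroup.index_top] at hN
    omega
  let ι : N → G := fun y => ((y : H) : G)
  have hι : Function.Injective ι := Subtype.val_injective.comp Subtype.val_injective
  have hsub : ι '' {x' | x' ∈ R ∧ IsConj x x'} ⊆ {x' | IsConj (ι x) x' ∧ Commute x' (ι x)} := by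
    rintro _ ⟨y, ⟨hyR, hy⟩, rfl⟩
    refine ⟨H.subtype.map_isConj (N.subtype.map_isConj hy), ?_⟩
    exact ((hxc y hyR).map N.subtype).map H.subtype
  have hxo : orderOf (ι x) = r := by simpa [ι] using hx
  have heq := Set.eq_of_subset_of_ncard_le hsub
    ((hconj _ hxo).trans (by rwa [Set.ncard_image_of_injective _ hι])) (Set.toFinite _)
  obtain ⟨y, hyR, hy⟩ := (Subgroup.mem_set_normalizer_iff.1 hh x).1 ⟨x, hxR, rfl⟩
  have hmem : ι y ∈ {x' | IsConj (ι x) x' ∧ Commute x' (ι x)} := by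
    refine ⟨isConj_iff.2 ⟨h, ?_⟩, ((hxc y hyR).map N.subtype).map H.subtype⟩
    exact (congrArg Subtype.val hy).symm
  rw [← heq] at hmem
  obtain ⟨y', ⟨-, hy'⟩, hyy⟩ := hmem
  rw [hι hyy] at hy'
  obtain ⟨n, hn⟩ := isConj_iff.1 hy'
  replace hn : (n : H) * x * (n : H)⁻¹ = y := congrArg Subtype.val hn
  replace hy : (y : H) = h * x * h⁻¹ := hy
  set c : H := (n : H)⁻¹ * h with hc
  have hcx : Commute c x := by
    have h1 : (n : H) * x * (n : H)⁻¹ = h * x * h⁻¹ := hn.trans hy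
    have h2 : h * x = (n : H) * x * (n : H)⁻¹ * h := by rw [h1]; group
    rw [Commute, SemiconjBy, hc, mul_assoc, h2]
    group
  have hcN : c ∉ N := fun hcN => hhN (by
    have := N.mul_mem n.2 hcN
    rwa [hc, mul_inv_cancel_left] at this)
  have hc2 : 2 ∣ orderOf c := by
    by_contra hodd
    obtain ⟨k, hk⟩ := Nat.odd_iff.2 (Nat.two_dvd_ne_zero.1 hodd)
    have h1 : c * (c ^ 2) ^ k = 1 := by rw [← pow_mul, ← pow_succ', ← hk, pow_orderOf_eq_one]
    refine hcN ?_
    rw [eq_inv_of_mul_eq_one_left h1]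
    exact N.inv_mem (N.pow_mem (Subgroup.sq_mem_of_index_two hN c) k)
  refine ⟨ι x, ((c ^ (orderOf c / 2) : H) : G), hxo, ?_, ?_⟩
  · rw [Subgroup.orderOf_coe, orderOf_pow_orderOf_div (orderOf_pos c).ne' hc2]
  · exact (hcx.pow_left _).map H.subtype

end SylowFusion

section MatrixQuotient

variable {Γ Q : Type*} [Group Γ] [Group Q] {π : Γ →* Q} {r : ℕ}
  {F : Type*} [Field F] [Fintype F] {n : Type*} [Fintype n] [DecidableEq n]
  {ρ : Γ →* Matrix n n F}

theorem exists_lift_irreducible_minpoly (hn : Fintype.card n = 4) (hρ : Function.Injective ρ)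
    (hπ : Function.Surjective π) (hker : π.ker = Subgroup.center Γ)
    (hZ : ∀ z ∈ Subgroup.center Γ, z ^ 4 = 1) (hr : r.Prime) (hr2 : r ≠ 2)
    (hrq : r ∣ Fintype.card F ^ 2 + 1) {x : Q} (hx : orderOf x = r) :
    ∃ y : Γ, π y = x ∧ y ^ r = 1 ∧ y ≠ 1 ∧ Irreducible (minpoly F (ρ y)) ∧
      (minpoly F (ρ y)).natDegree = 4 := by
  have hr4 : r.Coprime 4 := by
    rw [hr.coprime_iff_not_dvd, show 4 = 2 ^ 2 by rfl]
    exact fun h => hr2 ((Nat.prime_dvd_prime_iff_eq hr Nat.prime_two).1 (hr.dvd_of_dvd_pow h))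
  obtain ⟨y, hyx, hy⟩ := exists_lift_pow_eq_one hπ hker hZ hr4 (hx ▸ pow_orderOf_eq_one x)
  have hy1 : y ≠ 1 := by
    rintro rfl
    rw [← hyx, map_one, orderOf_one] at hx
    exact hr.ne_one hx.symm
  exact ⟨y, hyx, hy, hy1, irreducible_minpoly_of_pow_prime_eq_one hn hr hr2 hrq
    (by rw [← map_pow, hy, map_one]) (by rwa [Ne, ← map_one ρ, hρ.eq_iff])⟩

theorem commute_iff_of_lift (hker : π.ker = Subgroup.center Γ)
    (hZ : ∀ z ∈ Subgroup.center Γ, z ^ 4 = 1) (hr : r.Prime) (hr2 : r ≠ 2) {c y : Γ}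
    (hy : y ^ r = 1) : Commute (π c) (π y) ↔ Commute c y := by
  have hr4 : r.Coprime 4 := by
    rw [hr.coprime_iff_not_dvd, show 4 = 2 ^ 2 by rfl]
    exact fun h => hr2 ((Nat.prime_dvd_prime_iff_eq hr Nat.prime_two).1 (hr.dvd_of_dvd_pow h))
  exact ⟨commute_of_map_commute hker hZ hr4 hy, fun h => h.map π⟩

theorem commute_of_commute_of_orderOf_eq (hn : Fintype.card n = 4) (hρ : Function.Injective ρ)
    (hπ : Function.Surjective π) (hker : π.ker = Subgroup.center Γ)
    (hZ : ∀ z ∈ Subgroup.center Γ, z ^ 4 = 1) (hr : r.Prime) (hr2 : r ≠ 2)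
    (hrq : r ∣ Fintype.card F ^ 2 + 1) {x a b : Q} (hx : orderOf x = r)
    (ha : Commute a x) (hb : Commute b x) : Commute a b := by
  have : Nonempty n := Fintype.card_pos_iff.1 (by omega)
  obtain ⟨y, rfl, hy, -, hirr, hdeg⟩ :=
    exists_lift_irreducible_minpoly hn hρ hπ hker hZ hr hr2 hrq hx
  obtain ⟨a, rfl⟩ := hπ a
  obtain ⟨b, rfl⟩ := hπ b
  rw [commute_iff_of_lift hker hZ hr hr2 hy] at ha hb
  have hab := commute_of_commute_of_irreducible_minpoly hirr (hdeg.trans hn.symm)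
    (ha.map ρ) (hb.map ρ)
  have : Commute a b := hρ (by rw [map_mul, map_mul, hab.eq])
  exact this.map π

theorem ncard_isConj_commute_le (hn : Fintype.card n = 4) (hρ : Function.Injective ρ)
    (hπ : Function.Surjective π) (hker : π.ker = Subgroup.center Γ)
    (hZ : ∀ z ∈ Subgroup.center Γ, z ^ 4 = 1) (hr : r.Prime) (hr2 : r ≠ 2)
    (hrq : r ∣ Fintype.card F ^ 2 + 1) {x : Q} (hx : orderOf x = r) :
    {x' | IsConj x x' ∧ Commute x' x}.ncard ≤ 4 := by
  have : Nonempty n := Fintype.card_pos_iff.1 (by omega)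
  obtain ⟨y, rfl, hy, -, hirr, hdeg⟩ :=
    exists_lift_irreducible_minpoly hn hρ hπ hker hZ hr hr2 hrq hx
  obtain ⟨s, hs, hsmem⟩ := exists_finset_conj_of_commute hirr (hdeg.trans hn.symm)
  have hfin : (ρ ⁻¹' (s : Set (Matrix n n F))).Finite := s.finite_toSet.preimage hρ.injOn
  have hsub : {x' | IsConj (π y) x' ∧ Commute x' (π y)} ⊆
      π '' (ρ ⁻¹' (s : Set (Matrix n n F))) := by
    rintro x' ⟨hconj, hcom⟩
    obtain ⟨g, rfl⟩ := isConj_iff.1 hconj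
    obtain ⟨g, rfl⟩ := hπ g
    rw [← map_mul, ← map_inv, ← map_mul, commute_iff_of_lift hker hZ hr hr2 hy] at hcom
    refine ⟨g * y * g⁻¹, ?_, by simp⟩
    rw [Set.mem_preimage, map_mul, map_mul]
    refine hsmem _ _ (by rw [← map_mul, mul_inv_cancel, map_one]) ?_
    simpa using hcom.map ρ
  calc _ ≤ (π '' (ρ ⁻¹' (s : Set (Matrix n n F)))).ncard :=
        Set.ncard_le_ncard hsub (hfin.image _)
    _ ≤ (ρ ⁻¹' (s : Set (Matrix n n F))).ncard := Set.ncard_image_le hfin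
    _ = (ρ '' (ρ ⁻¹' (s : Set (Matrix n n F)))).ncard :=
        (Set.ncard_image_of_injective _ hρ).symm
    _ ≤ (s : Set (Matrix n n F)).ncard :=
        Set.ncard_le_ncard (Set.image_preimage_subset _ _) s.finite_toSet
    _ ≤ 4 := by rw [Set.ncard_coe_finset]; omega

theorem card_centralizer_mul_card_center [Finite Γ] (hπ : Function.Surjective π)
    (hker : π.ker = Subgroup.center Γ) (hZ : ∀ z ∈ Subgroup.center Γ, z ^ 4 = 1) (hr : r.Prime)
    (hr2 : r ≠ 2) {y : Γ} (hy : y ^ r = 1) :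
    Nat.card (Subgroup.centralizer {π y}) * Nat.card (Subgroup.center Γ) =
      Nat.card (Subgroup.centralizer {y}) := by
  have hcomap : (Subgroup.centralizer {π y}).comap π = Subgroup.centralizer {y} := by
    ext c
    simp only [Subgroup.mem_comap, Subgroup.mem_centralizer_singleton_iff]
    exact commute_iff_of_lift hker hZ hr hr2 hy
  have hindex := Subgroup.index_comap_of_surjective (Subgroup.centralizer {π y}) hπ
  rw [hcomap] at hindex
  have hQ : Nat.card Q * Nat.card (Subgroup.center Γ) = Nat.card Γ := by
    rw [← hker, ← π.ker.card_mul_index, Subgroup.index_ker, MonoidHom.range_eq_top.2 hπ,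
      Subgroup.card_top, mul_comm]
  have h1 := (Subgroup.centralizer {y}).card_mul_index
  have := Finite.of_surjective π hπ
  refine Nat.eq_of_mul_eq_mul_right (Nat.pos_of_ne_zero
    (Subgroup.index_ne_zero_of_finite (H := Subgroup.centralizer {y}))) ?_
  rw [h1, ← hQ, ← (Subgroup.centralizer {π y}).card_mul_index, hindex]
  ring

end MatrixQuotient

section SymplecticCenter

variable {l : Type*} [Fintype l] [DecidableEq l] {F : Type*} [Field F]

theorem Matrix.exists_eq_smul_one_of_forall_mulVec {n : Type*} [Fintype n] [DecidableEq n]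
    {A : Matrix n n F} (h : ∀ v, v ≠ 0 → ∃ t : F, A *ᵥ v = t • v) : ∃ t : F, A = t • 1 := by
  obtain ⟨t, ht⟩ := (toLin' A).exists_eq_smul_id_of_forall_notLinearIndependent fun v hv => by
    obtain ⟨t, ht⟩ := h v (by simpa using hv.ne_zero 0)
    rw [toLin'_apply, ht, LinearIndependent.pair_iff] at hv
    have := hv t (-1) (by simp)
    simp at this
  refine ⟨t, (toLin' (R := F)).injective ?_⟩
  rw [ht, map_smul, toLin'_one]
  rfl

variable (l F) in
/-- The map `x ↦ x + B(w, x) v` for the standard symplectic form `B`. -/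
def formTransvection (v w : l ⊕ l → F) : Matrix (l ⊕ l) (l ⊕ l) F := 1 + vecMulVec v (w ᵥ* J l F)

theorem formTransvection_mulVec (v w x : l ⊕ l → F) :
    formTransvection l F v w *ᵥ x = x + symplecticForm l F w x • v := by
  rw [formTransvection, add_mulVec, one_mulVec, vecMulVec_mulVec, ← dotProduct_mulVec,
    symplecticForm_apply]
  simp

theorem formTransvection_self_mem (v : l ⊕ l → F) (c : F) :
    formTransvection l F v (c • v) ∈ symplecticGroup l F := by
  rw [mem_symplecticGroup_iff]
  intro x y
  simp only [formTransvection_mulVec, map_add, map_smul, LinearMap.add_apply, LinearMap.smul_apply,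
    symplecticForm_self, smul_eq_mul]
  rw [symplecticForm_swap x v]
  ring

theorem SymplecticGroup.exists_eq_smul_one_of_mem_center {A : symplecticGroup l F}
    (hA : A ∈ Subgroup.center (symplecticGroup l F)) :
    ∃ t : F, (A : Matrix (l ⊕ l) (l ⊕ l) F) = t • 1 := by
  refine Matrix.exists_eq_smul_one_of_forall_mulVec fun v hv => ?_
  obtain ⟨x, hx⟩ := exists_symplecticForm_eq_one hv
  have h := congrArg (fun M : symplecticGroup l F => M.1 *ᵥ x)
    (Subgroup.mem_center_iff.1 hA ⟨_, formTransvection_self_mem v 1⟩)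
  simp only [Submonoid.coe_mul, ← mulVec_mulVec, formTransvection_mulVec, mulVec_add, one_smul,
    hx, add_right_inj] at h
  exact ⟨_, h.symm⟩

theorem smul_one_mem_symplecticGroup_iff [Nonempty l] {t : F} :
    t • (1 : Matrix (l ⊕ l) (l ⊕ l) F) ∈ symplecticGroup l F ↔ t ^ 2 = 1 := by
  simp only [mem_symplecticGroup_iff, smul_mulVec, one_mulVec, map_smul, LinearMap.smul_apply,
    smul_eq_mul, ← mul_assoc, ← sq]
  refine ⟨fun h => ?_, fun h x y => by rw [h, one_mul]⟩
  obtain ⟨i⟩ := ‹Nonempty l›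
  have := h (Pi.single (.inr i) 1) (Pi.single (.inl i) 1)
  rw [symplecticForm_single] at this
  simpa [J] using this

theorem SymplecticGroup.mem_center_iff [Nonempty l] {A : symplecticGroup l F} :
    A ∈ Subgroup.center (symplecticGroup l F) ↔
      ∃ t : F, (A : Matrix (l ⊕ l) (l ⊕ l) F) = t • 1 := by
  refine ⟨exists_eq_smul_one_of_mem_center, fun ⟨t, ht⟩ => Subgroup.mem_center_iff.2 fun C => ?_⟩
  ext1
  simp [ht]

theorem SymplecticGroup.sq_eq_one_of_mem_center [Nonempty l] {A : symplecticGroup l F}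
    (hA : A ∈ Subgroup.center (symplecticGroup l F)) : A ^ 2 = 1 := by
  obtain ⟨t, ht⟩ := exists_eq_smul_one_of_mem_center hA
  have h2 : t ^ 2 = 1 := smul_one_mem_symplecticGroup_iff.1 (ht ▸ A.2)
  ext1
  simp [ht, _root_.smul_pow, h2]

theorem Matrix.SpecialLinearGroup.pow_four_eq_one_of_mem_center {n : Type*} [Fintype n]
    [DecidableEq n] (hn : Fintype.card n = 4) {z : SpecialLinearGroup n F}
    (hz : z ∈ Subgroup.center (SpecialLinearGroup n F)) : z ^ 4 = 1 := by
  obtain ⟨t, ht, hz⟩ := Matrix.SpecialLinearGroup.mem_center_iff.1 hz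
  apply Subtype.ext
  rw [Matrix.SpecialLinearGroup.coe_pow, ← hz, ← map_pow, ← hn, ht, map_one,
    Matrix.SpecialLinearGroup.coe_one]

end SymplecticCenter

section ProjectiveSymplectic

variable {F : Type*} [Field F] [Fintype F] {r : ℕ}

theorem five_le_of_prime_dvd_sq_add_one {q : ℕ} (hr : r.Prime) (hr2 : r ≠ 2)
    (hrq : r ∣ q ^ 2 + 1) : 5 ≤ r := by
  by_contra! hlt
  have h2 := hr.two_le
  interval_cases r
  · exact hr2 rfl
  · have h3 : (q ^ 2 + 1) % 3 = 0 := Nat.mod_eq_zero_of_dvd hrq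
    rw [Nat.add_mod, Nat.pow_mod] at h3
    have : q % 3 < 3 := Nat.mod_lt _ (by norm_num)
    interval_cases q % 3 <;> simp at h3
  · exact absurd hr (by norm_num)

/-- In a group isomorphic to `PSp₄(q)`, central elements of order `r` in a Sylow `r`-subgroup,
where `r` is an odd prime divisor of `q² + 1`, have four conjugates in it. -/
theorem four_le_ncard_isConj_of_mulEquiv_PSp4 {N : Type*} [Group N]
    (φ : N ≃* symplecticGroup (Fin 2) F ⧸ Subgroup.center (symplecticGroup (Fin 2) F))
    [Fact r.Prime] (hr2 : r ≠ 2) (hrq : r ∣ Fintype.card F ^ 2 + 1) (R : Sylow r N) :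
    ∃ x ∈ R, orderOf x = r ∧ (∀ y ∈ R, Commute y x) ∧ 4 ≤ {x' | x' ∈ R ∧ IsConj x x'}.ncard := by
  have hr : r.Prime := Fact.out
  have hq : 1 ≤ Fintype.card F := Fintype.card_pos
  set q := Fintype.card F with hqdef
  set Γ := symplecticGroup (Fin 2) F
  let π : Γ →* N := φ.symm.toMonoidHom.comp (QuotientGroup.mk' _)
  have hπ : Function.Surjective π := φ.symm.surjective.comp (QuotientGroup.mk'_surjective _)
  have hker : π.ker = Subgroup.center Γ := by
    exact (MonoidHom.ker_mulEquiv_comp _ φ.symm).trans (QuotientGroup.ker_mk' _)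
  have hZ : ∀ z ∈ Subgroup.center Γ, z ^ 4 = 1 := fun z hz => by
    rw [show 4 = 2 * 2 by rfl, pow_mul, SymplecticGroup.sq_eq_one_of_mem_center hz, one_pow]
  let ρ : Γ →* Matrix (Fin 2 ⊕ Fin 2) (Fin 2 ⊕ Fin 2) F := Γ.subtype
  have hρ : Function.Injective ρ := Subtype.val_injective
  have hn : Fintype.card (Fin 2 ⊕ Fin 2) = 4 := by simp
  have hfin : Finite N := Finite.of_surjective π hπ
  have hN : Nat.card N * Nat.card (Subgroup.center Γ) = Nat.card Γ := by
    rw [← hker, ← π.ker.card_mul_index, Subgroup.index_ker, MonoidHom.range_eq_top.2 hπ,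
      Subgroup.card_top, mul_comm]
  have hΓ : Nat.card Γ = (q ^ 2 + 1) * ((q ^ 2 - 1) ^ 2 * q ^ 4) := by
    rw [card_symplecticGroup, ← hqdef, show q ^ 4 - 1 = (q ^ 2 + 1) * (q ^ 2 - 1) by
      rw [show q ^ 4 = (q ^ 2) ^ 2 by ring, ← Nat.sq_sub_sq, one_pow]]
    ring
  refine Sylow.exists_four_le_ncard_isConj (c := q ^ 2 + 1) (fun x hx => ?_)
    (fun x a b hx => commute_of_commute_of_orderOf_eq hn hρ hπ hker hZ hr hr2 hrq hx)
    (fun x hx => ncard_isConj_commute_le hn hρ hπ hker hZ hr hr2 hrq hx) (hN.trans hΓ)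
    (by positivity) ?_ (five_le_of_prime_dvd_sq_add_one hr hr2 hrq) ?_ R
  · obtain ⟨y, rfl, hy, hy1, -⟩ :=
      exists_lift_irreducible_minpoly hn hρ hπ hker hZ hr hr2 hrq hx
    rw [card_centralizer_mul_card_center hπ hker hZ hr hr2 hy,
      ← SymplecticGroup.card_commute hr hr2 hrq y.2 (congrArg Subtype.val hy)
        fun h => hy1 (Subtype.ext h)]
    refine Nat.card_congr (Equiv.subtypeEquivRight fun u => ?_)
    rw [Subgroup.mem_centralizer_singleton_iff, Subtype.ext_iff]
    rfl
  · rw [← Int.natCast_modEq_iff, Int.modEq_comm, Int.modEq_iff_dvd]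
    refine (Int.natCast_dvd_natCast.2 hrq).trans ⟨(q ^ 2) ^ 3 - 3 * (q ^ 2) ^ 2 + 4 * q ^ 2 - 4, ?_⟩
    rw [Nat.cast_mul, Nat.cast_pow, Nat.cast_sub (Nat.one_le_pow _ _ hq)]
    push_cast
    ring
  · have h1 : r ∣ Nat.card N * Nat.card (Subgroup.center Γ) := by
      rw [hN, hΓ]
      exact hrq.mul_right _
    refine (hr.dvd_mul.1 h1).resolve_right fun h => ?_
    obtain ⟨⟨z, hz⟩, hzr⟩ := exists_prime_orderOf_dvd_card' r h
    rw [Subgroup.orderOf_mk] at hzr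
    have := orderOf_dvd_of_pow_eq_one (SymplecticGroup.sq_eq_one_of_mem_center hz)
    rw [hzr] at this
    exact hr2 ((Nat.prime_dvd_prime_iff_eq hr Nat.prime_two).1 this)

end ProjectiveSymplectic

section ProjectiveLinear

variable {F : Type*} [Field F] [Fintype F] {r : ℕ}

theorem exists_odd_prime_dvd_sq_add_one {q : ℕ} (hq : Odd q) (hq1 : 1 < q) :
    ∃ r, r.Prime ∧ r ≠ 2 ∧ r ∣ q ^ 2 + 1 := by
  obtain ⟨k, rfl⟩ := hq
  have hk : 1 ≤ k := by omega
  obtain ⟨r, hr, hrd⟩ := Nat.exists_prime_and_dvd (n := 2 * (k * (k + 1)) + 1) (by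
    have : 0 < k * (k + 1) := by positivity
    omega)
  refine ⟨r, hr, ?_, hrd.trans ⟨2, by ring⟩⟩
  rintro rfl
  omega

/-- For `q ≡ 1 (mod 4)` no extension of `PSp₄(q)` by a group of order two lies in `PSL₄(q)`. -/
theorem not_index_two_PSp4_of_card_mod_four_eq_one (hF : Fintype.card F % 4 = 1)
    {H : Subgroup (ProjectiveSpecialLinearGroup (Fin 4) F)} {N : Subgroup H} (hN : N.index = 2)
    (φ : N ≃* symplecticGroup (Fin 2) F ⧸ Subgroup.center (symplecticGroup (Fin 2) F)) :
    False := by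
  obtain ⟨r, hr, hr2, hrq⟩ := exists_odd_prime_dvd_sq_add_one
    (Nat.odd_iff.2 (by omega)) (Fintype.one_lt_card (α := F))
  have : Fact r.Prime := ⟨hr⟩
  have : N.Normal := Subgroup.normal_of_index_eq_two hN
  have hn : Fintype.card (Fin 4) = 4 := by simp
  let π : SpecialLinearGroup (Fin 4) F →* ProjectiveSpecialLinearGroup (Fin 4) F :=
    QuotientGroup.mk' _
  have hπ : Function.Surjective π := QuotientGroup.mk'_surjective _
  have hker : π.ker = Subgroup.center _ := QuotientGroup.ker_mk' _
  let ρ : SpecialLinearGroup (Fin 4) F →* Matrix (Fin 4) (Fin 4) F :=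
    ⟨⟨Subtype.val, rfl⟩, fun _ _ => rfl⟩
  have hρ : Function.Injective ρ := Subtype.val_injective
  have hZ : ∀ z ∈ Subgroup.center (SpecialLinearGroup (Fin 4) F), z ^ 4 = 1 := fun z hz =>
    SpecialLinearGroup.pow_four_eq_one_of_mem_center hn hz
  have : Finite (ProjectiveSpecialLinearGroup (Fin 4) F) := Finite.of_surjective π hπ
  obtain ⟨x, u, hx, hu, hux⟩ := exists_involution_commute_of_index_two (r := r) hN
    (fun x hx => ncard_isConj_commute_le hn hρ hπ hker hZ hr hr2 hrq hx)
    (four_le_ncard_isConj_of_mulEquiv_PSp4 φ hr2 hrq)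
  obtain ⟨y, rfl, hy, -, hirr, hdeg⟩ :=
    exists_lift_irreducible_minpoly hn hρ hπ hker hZ hr hr2 hrq hx
  obtain ⟨u, rfl⟩ := hπ u
  rw [commute_iff_of_lift hker hZ hr hr2 hy] at hux
  have hu2 : u ^ 2 ∈ Subgroup.center (SpecialLinearGroup (Fin 4) F) := by
    rw [← hker, MonoidHom.mem_ker, map_pow, ← hu, pow_orderOf_eq_one]
  obtain ⟨s, -, hs⟩ := Matrix.SpecialLinearGroup.mem_center_iff.1 hu2
  obtain ⟨t, ht⟩ := eq_smul_one_of_sq_eq_smul_one hn hirr hdeg hF (hux.map ρ) (s := s)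
    (by rw [← map_pow]; exact hs.symm.trans (by simp [smul_one_eq_diagonal])) u.2
  have huZ : u ∈ Subgroup.center (SpecialLinearGroup (Fin 4) F) := by
    refine Subgroup.mem_center_iff.2 fun g => hρ ?_
    rw [map_mul, map_mul, ht]
    simp
  rw [← hker, MonoidHom.mem_ker] at huZ
  rw [huZ, orderOf_one] at hu
  omega

end ProjectiveLinear

section Transvections

theorem Matrix.SpecialLinearGroup.diag2n_eq_prod_transvection {ι F : Type*} [Fintype ι]
    [DecidableEq ι] [Field F] {i j : ι} (hij : i ≠ j) {c : F} (hc : c ≠ 0) :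
    diag2n hij c hc = transvection hij c * transvection hij.symm (-c⁻¹) * transvection hij c *
      (transvection hij (-1) * transvection hij.symm 1 * transvection hij (-1)) := by
  apply Subtype.ext
  have h1 : (diag2n hij c hc).1 = 1 + single i i (c - 1) + single j j (c⁻¹ - 1) := by
    rw [diag2n_coe]
    ext k m
    simp only [diagonal_apply, add_apply, one_apply, single_apply]
    split_ifs <;> grind
  simp only [coe_mul, transvection_coe, h1, mul_add, add_mul, mul_one, one_mul,
    single_mul_single_same, single_mul_single_of_ne _ _ _ _ hij,
    single_mul_single_of_ne _ _ _ _ hij.symm, add_zero]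
  ext k m
  simp only [add_apply, one_apply, single_apply]
  split_ifs <;> grind

/-- A subgroup of a special linear group containing all transvections is everything. -/
theorem Matrix.SpecialLinearGroup.eq_top_of_transvection_mem {ι F : Type*} [Fintype ι]
    [DecidableEq ι] [Nontrivial ι] [Field F] {K : Subgroup (SpecialLinearGroup ι F)}
    (h : ∀ (i j : ι) (hij : i ≠ j) (c : F), transvection hij c ∈ K) : K = ⊤ := by
  refine eq_top_iff.2 fun M _ => diagonal_transvection_induction' (· ∈ K) M
    (fun i j hij c hc => ?_) h fun _ _ => K.mul_mem
  rw [diag2n_eq_prod_transvection]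
  exact K.mul_mem (K.mul_mem (K.mul_mem (h _ _ _ _) (h _ _ _ _)) (h _ _ _ _))
    (K.mul_mem (K.mul_mem (h _ _ _ _) (h _ _ _ _)) (h _ _ _ _))

variable {l : Type*} [Fintype l] [DecidableEq l] {F : Type*} [Field F]

theorem Matrix.eq_of_forall_mulVec_eq {n : Type*} [Fintype n] [DecidableEq n] {A C : Matrix n n F}
    (h : ∀ x, A *ᵥ x = C *ᵥ x) : A = C :=
  (toLin' (R := F)).injective (LinearMap.ext h)

theorem formTransvection_mul {v w : l ⊕ l → F} (h : symplecticForm l F w v = 0)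
    (w' : l ⊕ l → F) :
    formTransvection l F v w * formTransvection l F v w' = formTransvection l F v (w + w') := by
  refine Matrix.eq_of_forall_mulVec_eq fun x => ?_
  simp only [← mulVec_mulVec, formTransvection_mulVec, map_add, map_smul, h, LinearMap.add_apply,
    add_smul, smul_zero, add_zero]
  abel

theorem conj_formTransvection {g g' : Matrix (l ⊕ l) (l ⊕ l) F} (hg : g * g' = 1)
    {v w w' : l ⊕ l → F}
    (hw : ∀ x, symplecticForm l F w' x = symplecticForm l F w (g' *ᵥ x)) :
    g * formTransvection l F v w * g' = formTransvection l F (g *ᵥ v) w' := by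
  refine Matrix.eq_of_forall_mulVec_eq fun x => ?_
  simp only [← mulVec_mulVec, formTransvection_mulVec, mulVec_add, mulVec_smul, hw]
  rw [mulVec_mulVec, hg, one_mulVec]

theorem exists_symplecticForm_eq_zero_ne_zero {v w : l ⊕ l → F} (hv : v ≠ 0)
    (hw : ∀ t : F, w ≠ t • v) :
    ∃ u, symplecticForm l F u v = 0 ∧ symplecticForm l F u w ≠ 0 := by
  by_contra! h
  obtain ⟨z, hz⟩ := exists_symplecticForm_eq_one hv
  refine hw (symplecticForm l F w z) (sub_eq_zero.1 ?_)
  by_contra hne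
  obtain ⟨x, hx⟩ := exists_symplecticForm_ne_zero hne
  have h1 := h (x - symplecticForm l F v x • z) (by
    rw [symplecticForm_swap]
    simp [hz])
  rw [symplecticForm_swap] at h1
  refine hx ?_
  simp only [map_sub, map_smul, smul_eq_mul, neg_eq_zero, LinearMap.sub_apply,
    LinearMap.smul_apply] at h1 ⊢
  linear_combination h1

/-- Symplectic transvections move any nonzero vector to any other, in at most two steps. -/
theorem forall_of_formTransvection_invariant {p : (l ⊕ l → F) → Prop}
    (hp : ∀ v u (c : F), p v → p (formTransvection l F u (c • u) *ᵥ v)) {v : l ⊕ l → F} (hv : v ≠ 0)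
    (hpv : p v) {v' : l ⊕ l → F} (hv' : v' ≠ 0) : p v' := by
  have hstep : ∀ a b, symplecticForm l F b a ≠ 0 → p a → p b := fun a b hab ha => by
    have := hp a (b - a) (symplecticForm l F b a)⁻¹ ha
    rw [formTransvection_mulVec] at this
    simpa [symplecticForm_self, hab] using this
  obtain ⟨a, ha⟩ := exists_symplecticForm_ne_zero hv
  obtain ⟨b, hb⟩ := exists_symplecticForm_ne_zero hv'
  obtain ⟨c, hc, hc'⟩ : ∃ c, symplecticForm l F c v ≠ 0 ∧ symplecticForm l F v' c ≠ 0 := by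
    simp only [symplecticForm_swap _ v, neg_ne_zero]
    by_cases h1 : symplecticForm l F v' a = 0
    · by_cases h2 : symplecticForm l F v b = 0
      · exact ⟨a + b, by simpa [h2] using ha, by simpa [h1] using hb⟩
      · exact ⟨b, h2, hb⟩
    · exact ⟨a, ha, h1⟩
  exact hstep c v' hc' (hstep v c hc hpv)

end Transvections

section Similitudes

variable {l : Type*} [Fintype l] [DecidableEq l] {F : Type*} [Field F]

variable (l F) in
/-- The inclusion of the symplectic group into the special linear group. -/
def SymplecticGroup.toSL : symplecticGroup l F →* SpecialLinearGroup (l ⊕ l) F where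
  toFun A := ⟨A, SymplecticGroup.det_eq_one A.2⟩
  map_one' := rfl
  map_mul' _ _ := rfl

theorem SymplecticGroup.mem_range_toSL {g : SpecialLinearGroup (l ⊕ l) F} :
    g ∈ (SymplecticGroup.toSL l F).range ↔ (g : Matrix (l ⊕ l) (l ⊕ l) F) ∈ symplecticGroup l F :=
  ⟨fun ⟨A, hA⟩ => hA ▸ A.2, fun h => ⟨⟨g, h⟩, rfl⟩⟩

variable (l F) in
/-- Special linear maps preserving the symplectic form up to sign. -/
def signedSymplectic : Subgroup (SpecialLinearGroup (l ⊕ l) F) where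
  carrier := {g | ∃ ε : F, ε ^ 2 = 1 ∧ ∀ x y,
    symplecticForm l F ((g : Matrix _ _ F) *ᵥ x) ((g : Matrix _ _ F) *ᵥ y) =
      ε * symplecticForm l F x y}
  one_mem' := ⟨1, one_pow 2, fun x y => by simp⟩
  mul_mem' := by
    rintro g h ⟨ε, hε, hg⟩ ⟨δ, hδ, hh⟩
    refine ⟨ε * δ, by rw [mul_pow, hε, hδ, one_mul], fun x y => ?_⟩
    rw [Matrix.SpecialLinearGroup.coe_mul, ← mulVec_mulVec, ← mulVec_mulVec, hg, hh, mul_assoc]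
  inv_mem' := by
    rintro g ⟨ε, hε, hg⟩
    refine ⟨ε, hε, fun x y => ?_⟩
    have hgg : ∀ z, (g : Matrix (l ⊕ l) (l ⊕ l) F) *ᵥ ((↑g⁻¹ : Matrix (l ⊕ l) (l ⊕ l) F) *ᵥ z) = z :=
      fun z => by
        rw [mulVec_mulVec, ← Matrix.SpecialLinearGroup.coe_mul, mul_inv_cancel,
          Matrix.SpecialLinearGroup.coe_one, one_mulVec]
    have := hg ((↑g⁻¹ : Matrix _ _ F) *ᵥ x) ((↑g⁻¹ : Matrix _ _ F) *ᵥ y)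
    rw [hgg, hgg] at this
    rw [this, ← mul_assoc, ← sq, hε, one_mul]

theorem range_toSL_le_signedSymplectic :
    (SymplecticGroup.toSL l F).range ≤ signedSymplectic l F := fun g hg =>
  ⟨1, one_pow 2, fun x y => by
    rw [one_mul, mem_symplecticGroup_iff.1 (SymplecticGroup.mem_range_toSL.1 hg)]⟩

/-- A special linear map rescaling the symplectic form does so by a root of unity. -/
theorem pow_card_eq_one_of_symplecticForm_eq {g : SpecialLinearGroup (l ⊕ l) F} {ε : F}
    (hg : ∀ x y, symplecticForm l F ((g : Matrix _ _ F) *ᵥ x) ((g : Matrix _ _ F) *ᵥ y) =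
      ε * symplecticForm l F x y) :
    ε ^ Fintype.card (l ⊕ l) = 1 := by
  have h1 : (g : Matrix _ _ F)ᵀ * J l F * (g : Matrix _ _ F) = ε • J l F := by
    ext i j
    rw [transpose_mul_J_mul_apply, ← mulVec_single_one, ← mulVec_single_one, hg,
      symplecticForm_single]
    rfl
  have h2 := congrArg det h1
  rw [det_mul, det_mul, det_transpose, g.det_coe, det_smul, one_mul, mul_one] at h2
  exact (mul_eq_right₀ (isUnit_det_J l F).ne_zero).1 h2.symm

/-- If the image of every vector under the adjoint of `g⁻¹` is proportional to its image
under `g`, then `g` rescales the symplectic form. -/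
theorem exists_symplecticForm_eq_of_forall_proportional {g g' : Matrix (l ⊕ l) (l ⊕ l) F}
    (hg : g * g' = 1) (h : ∀ v w, v ≠ 0 →
      (∀ x, symplecticForm l F w x = symplecticForm l F v (g' *ᵥ x)) → ∃ t : F, w = t • g *ᵥ v) :
    ∃ ε : F, ∀ x y, symplecticForm l F x y =
      ε * symplecticForm l F (g *ᵥ x) (g *ᵥ y) := by
  have hg' : g' * g = 1 := mul_eq_one_comm.1 hg
  set X : Matrix (l ⊕ l) (l ⊕ l) F := J l F * g'ᵀ * -J l F
  have hX : ∀ v x, symplecticForm l F (X *ᵥ v) x = symplecticForm l F v (g' *ᵥ x) := by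
    intro v x
    rw [symplecticForm_apply, symplecticForm_apply, ← vecMul_transpose, ← dotProduct_mulVec,
      mulVec_mulVec, mulVec_mulVec]
    congr 2
    simp only [X, transpose_mul, transpose_neg, J_transpose, transpose_transpose, neg_neg,
      Matrix.mul_assoc]
    simp [J_squared]
  obtain ⟨ε, hε⟩ := Matrix.exists_eq_smul_one_of_forall_mulVec (A := g' * X) fun v hv => by
    obtain ⟨t, ht⟩ := h v (X *ᵥ v) hv (hX v)
    exact ⟨t, by rw [← mulVec_mulVec, ht, mulVec_smul, mulVec_mulVec, hg', one_mulVec]⟩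
  have hXg : X = ε • g := by
    rw [← Matrix.one_mul X, ← hg, Matrix.mul_assoc, hε]
    simp
  refine ⟨ε, fun x y => ?_⟩
  have := hX x (g *ᵥ y)
  rw [mulVec_mulVec, hg', one_mulVec, hXg, smul_mulVec] at this
  rw [← this, map_smul, LinearMap.smul_apply, smul_eq_mul]

end Similitudes

section Maximality

variable {l : Type*} [Fintype l] [DecidableEq l] {F : Type*} [Field F]

theorem conj_formTransvection_self {u v : l ⊕ l → F} (c : F) (w : l ⊕ l → F) :
    formTransvection l F u (c • u) * formTransvection l F v w * formTransvection l F u (-c • u) =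
      formTransvection l F (formTransvection l F u (c • u) *ᵥ v)
        (formTransvection l F u (c • u) *ᵥ w) := by
  refine conj_formTransvection ?_ fun x => ?_
  · rw [formTransvection_mul (by simp [symplecticForm_self])]
    simp [formTransvection]
  · have := symplecticForm_swap w u
    simp only [formTransvection_mulVec, map_add, map_smul, LinearMap.add_apply,
      LinearMap.smul_apply, smul_eq_mul]
    rw [this]
    ring

/-- A monoid containing the symplectic group and one transvection outside it contains every
transvection. -/
theorem formTransvection_mem_of_mem {M : Submonoid (Matrix (l ⊕ l) (l ⊕ l) F)}
    (hM : symplecticGroup l F ≤ M) {v w : l ⊕ l → F} (hv : v ≠ 0) (hw : ∀ t : F, w ≠ t • v)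
    (hwv : symplecticForm l F w v = 0) (h : formTransvection l F v w ∈ M)
    (h' : formTransvection l F v (-w) ∈ M) {v' w' : l ⊕ l → F} (hv' : v' ≠ 0)
    (hwv' : symplecticForm l F w' v' = 0) : formTransvection l F v' w' ∈ M := by
  have hT : ∀ u (c : F), formTransvection l F u (c • u) ∈ M := fun u c =>
    hM (formTransvection_self_mem u c)
  have hmul : ∀ a b, symplecticForm l F a v = 0 → formTransvection l F v a ∈ M →
      formTransvection l F v b ∈ M → formTransvection l F v (a + b) ∈ M := fun a b ha hma hmb =>
    formTransvection_mul ha b ▸ M.mul_mem hma hmb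
  have hne : ∀ u, symplecticForm l F u v = 0 → symplecticForm l F u w ≠ 0 →
      ∀ c : F, formTransvection l F v (c • u) ∈ M := fun u hu huw c => by
    have h1 := M.mul_mem (M.mul_mem (hT u (c / symplecticForm l F u w)) h)
      (hT u (-(c / symplecticForm l F u w)))
    rw [conj_formTransvection_self] at h1
    simp only [formTransvection_mulVec, map_smul, LinearMap.smul_apply, hu, smul_eq_mul, mul_zero,
      zero_smul, add_zero, div_mul_cancel₀ c huw] at h1
    simpa using hmul (-w) _ (by simp [hwv]) h' h1
  obtain ⟨u₀, hu₀, hu₀w⟩ := exists_symplecticForm_eq_zero_ne_zero hv hw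
  have hgood : ∀ u, symplecticForm l F u v = 0 → formTransvection l F v u ∈ M := fun u hu => by
    by_cases huw : symplecticForm l F u w = 0
    · have h1 := hne (u + u₀) (by simp [hu, hu₀]) (by simpa [huw] using hu₀w) 1
      have h2 := hne u₀ hu₀ hu₀w (-1)
      simpa using hmul _ _ (by simp [hu, hu₀]) h1 h2
    · simpa using hne u hu huw 1
  refine forall_of_formTransvection_invariant
    (p := fun a => ∀ u, symplecticForm l F u a = 0 → formTransvection l F a u ∈ M)
    (fun a u c ha z hz => ?_) hv hgood hv' w' hwv'
  have hinv : formTransvection l F u (c • u) * formTransvection l F u (-c • u) = 1 := by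
    rw [formTransvection_mul (by simp [symplecticForm_self])]
    simp [formTransvection]
  have hz' : z = formTransvection l F u (c • u) *ᵥ (formTransvection l F u (-c • u) *ᵥ z) := by
    rw [mulVec_mulVec, hinv, one_mulVec]
  rw [hz', ← conj_formTransvection_self]
  refine M.mul_mem (M.mul_mem (hT u c) (ha _ ?_)) (hT u (-c))
  rw [← mem_symplecticGroup_iff.1 (formTransvection_self_mem u c), ← hz', hz]

theorem transvection_eq_formTransvection (i j : l ⊕ l) (c : F) :
    Matrix.transvection i j c =
      formTransvection l F (Pi.single i 1) (Pi.single j c ᵥ* -J l F) := by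
  rw [formTransvection, vecMul_vecMul, Matrix.neg_mul, J_squared, neg_neg, vecMul_one,
    Matrix.transvection]
  congr 1
  ext a b
  simp [vecMulVec_apply, single_apply, Pi.single_apply]
  grind

/-- If the roots of unity of order dividing the dimension have square one, then the proper
overgroups of the symplectic group in the special linear group lie in `signedSymplectic`. -/
theorem eq_top_of_not_le_signedSymplectic [Nonempty l]
    (hroot : ∀ t : F, t ^ Fintype.card (l ⊕ l) = 1 → t ^ 2 = 1)
    {K : Subgroup (SpecialLinearGroup (l ⊕ l) F)} (hK : (SymplecticGroup.toSL l F).range ≤ K)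
    (hK' : ¬ K ≤ signedSymplectic l F) : K = ⊤ := by
  obtain ⟨g, hgK, hg⟩ := SetLike.not_le_iff_exists.1 hK'
  set M : Submonoid (Matrix (l ⊕ l) (l ⊕ l) F) :=
    K.toSubmonoid.map Matrix.SpecialLinearGroup.coeMonoidHom
  have hmem : ∀ {h : SpecialLinearGroup (l ⊕ l) F}, (h : Matrix (l ⊕ l) (l ⊕ l) F) ∈ M ↔ h ∈ K :=
    fun {h} => ⟨fun ⟨k, hk, hkh⟩ => Subtype.ext hkh ▸ hk, fun hh => ⟨h, hh, rfl⟩⟩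
  have hM : symplecticGroup l F ≤ M := fun A hA =>
    hmem.2 (hK ⟨⟨A, hA⟩, rfl⟩ : SymplecticGroup.toSL l F ⟨A, hA⟩ ∈ K)
  have hgg : (g : Matrix (l ⊕ l) (l ⊕ l) F) * (↑g⁻¹ : Matrix (l ⊕ l) (l ⊕ l) F) = 1 := by
    rw [← Matrix.SpecialLinearGroup.coe_mul, mul_inv_cancel, Matrix.SpecialLinearGroup.coe_one]
  have hgg' : (↑g⁻¹ : Matrix (l ⊕ l) (l ⊕ l) F) * (g : Matrix (l ⊕ l) (l ⊕ l) F) = 1 :=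
    mul_eq_one_comm.1 hgg
  obtain ⟨v, w, hv, hw, hwt⟩ : ∃ v w, v ≠ 0 ∧
      (∀ x, symplecticForm l F w x =
        symplecticForm l F v ((↑g⁻¹ : Matrix (l ⊕ l) (l ⊕ l) F) *ᵥ x)) ∧
      ∀ t : F, w ≠ t • (g : Matrix (l ⊕ l) (l ⊕ l) F) *ᵥ v := by
    by_contra! hcon
    obtain ⟨ε, hε⟩ := exists_symplecticForm_eq_of_forall_proportional hgg hcon
    have hε0 : ε ≠ 0 := by
      rintro rfl
      obtain ⟨y, hy⟩ := exists_symplecticForm_ne_zero (l := l) (F := F) (x := 1) one_ne_zero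
      exact hy (by rw [hε, zero_mul])
    have hε' : ∀ x y, symplecticForm l F ((g : Matrix (l ⊕ l) (l ⊕ l) F) *ᵥ x)
        ((g : Matrix (l ⊕ l) (l ⊕ l) F) *ᵥ y) = ε⁻¹ * symplecticForm l F x y := fun x y => by
      rw [hε x y, inv_mul_cancel_left₀ hε0]
    exact hg ⟨ε⁻¹, hroot _ (pow_card_eq_one_of_symplecticForm_eq hε'), hε'⟩
  have hconj : ∀ c : F, formTransvection l F ((g : Matrix (l ⊕ l) (l ⊕ l) F) *ᵥ v) (c • w) ∈ M :=
    fun c => by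
      rw [← conj_formTransvection (v := v) (w := c • v) (w' := c • w) hgg (fun x => by simp [hw])]
      exact M.mul_mem (M.mul_mem (hmem.2 hgK) (hM (formTransvection_self_mem v c)))
        (hmem.2 (K.inv_mem hgK))
  have : Nontrivial (l ⊕ l) :=
    ⟨Sum.inl (Classical.arbitrary l), Sum.inr (Classical.arbitrary l), Sum.inl_ne_inr⟩
  refine Matrix.SpecialLinearGroup.eq_top_of_transvection_mem fun i j hij c => hmem.1 ?_
  rw [Matrix.SpecialLinearGroup.transvection_coe]
  have htr : (1 : Matrix (l ⊕ l) (l ⊕ l) F) + single i j c = Matrix.transvection i j c := rfl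
  rw [htr, transvection_eq_formTransvection]
  refine formTransvection_mem_of_mem hM (fun h0 => hv ?_) hwt ?_
    (by simpa using hconj 1) (by simpa using hconj (-1)) (by simp) ?_
  · rw [← one_mulVec v, ← hgg', ← mulVec_mulVec, h0, mulVec_zero]
  · rw [hw, mulVec_mulVec, hgg', one_mulVec, symplecticForm_self]
  · rw [symplecticForm_apply, dotProduct_mulVec, vecMul_vecMul, Matrix.neg_mul, J_squared, neg_neg,
      vecMul_one]
    simp [hij]

end Maximality

section Index

/-- The special linear group does not depend on the naming of the indices. -/
def Matrix.SpecialLinearGroup.reindexMulEquiv {m n : Type*} [Fintype m] [DecidableEq m] [Fintype n]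
    [DecidableEq n] (F : Type*) [Field F] (e : m ≃ n) :
    SpecialLinearGroup m F ≃* SpecialLinearGroup n F where
  toFun A := ⟨reindexAlgEquiv F F e A, by rw [det_reindexAlgEquiv, A.2]⟩
  invFun A := ⟨reindexAlgEquiv F F e.symm A, by rw [det_reindexAlgEquiv, A.2]⟩
  left_inv A := Subtype.ext ((reindexAlgEquiv F F e).symm_apply_apply _)
  right_inv A := Subtype.ext ((reindexAlgEquiv F F e).apply_symm_apply _)
  map_mul' A C := Subtype.ext (map_mul (reindexAlgEquiv F F e) _ _)

theorem Matrix.SpecialLinearGroup.card_mul_card_units {n : Type*} [Fintype n] [DecidableEq n]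
    [Nonempty n] {F : Type*} [Field F] :
    Nat.card (SpecialLinearGroup n F) * Nat.card Fˣ = Nat.card (GL n F) := by
  have hrange : (toGL : SpecialLinearGroup n F →* GL n F).range = GeneralLinearGroup.det.ker :=
    SetLike.coe_injective range_toGL
  have hindex : (GeneralLinearGroup.det : GL n F →* Fˣ).ker.index = Nat.card Fˣ := by
    rw [Subgroup.index_ker, MonoidHom.range_eq_top.2 GeneralLinearGroup.det_surjective,
      Subgroup.card_top]
  rw [Nat.card_congr (MonoidHom.ofInjective toGL_injective).toEquiv, hrange, ← hindex,
    Subgroup.card_mul_index]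

theorem SymplecticGroup.index_range_toSL {F : Type*} [Field F] [Fintype F] :
    (SymplecticGroup.toSL (Fin 2) F).range.index =
      Fintype.card F ^ 2 * (Fintype.card F ^ 3 - 1) := by
  have hinj : Function.Injective (SymplecticGroup.toSL (Fin 2) F) := fun A C h =>
    Subtype.ext (congrArg (Matrix.SpecialLinearGroup.coeMonoidHom (R := F)) h)
  have h1 := (SymplecticGroup.toSL (Fin 2) F).range.card_mul_index
  have h2 := Matrix.SpecialLinearGroup.card_mul_card_units (n := Fin 4) (F := F)
  rw [← Nat.card_congr (MonoidHom.ofInjective hinj).toEquiv, card_symplecticGroup,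
    Nat.card_congr (Matrix.SpecialLinearGroup.reindexMulEquiv F
      (finSumFinEquiv (m := 2) (n := 2))).toEquiv] at h1
  rw [Matrix.card_GL_field, Nat.card_units, Nat.card_eq_fintype_card (α := F), ← h1] at h2
  have hq : 1 < Fintype.card F := Fintype.one_lt_card
  generalize Fintype.card F = q at h2 hq ⊢
  simp only [Fin.prod_univ_four, Fin.coe_ofNat_eq_mod] at h2
  norm_num at h2
  have hpow : ∀ k, 0 < k → 0 < q ^ k - 1 := fun k hk =>
    Nat.sub_pos_of_lt (Nat.one_lt_pow hk.ne' hq)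
  have e1 : q ^ 4 - q = q * (q ^ 3 - 1) := by rw [Nat.mul_sub]; congr 1 <;> ring
  have e2 : q ^ 4 - q ^ 2 = q ^ 2 * (q ^ 2 - 1) := by rw [Nat.mul_sub]; congr 1 <;> ring
  have e3 : q ^ 4 - q ^ 3 = q ^ 3 * (q - 1) := by rw [Nat.mul_sub]; congr 1; ring
  rw [e1, e2, e3] at h2
  have hpos : 0 < (q ^ 4 - 1) * (q ^ 3 * ((q ^ 2 - 1) * q)) * (q - 1) := by
    have := hpow 4 (by norm_num)
    have := hpow 2 (by norm_num)
    have : 0 < q - 1 := by lia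
    positivity
  refine Nat.eq_of_mul_eq_mul_left hpos ?_
  linear_combination h2

theorem relIndex_range_toSL_signedSymplectic {F : Type*} [Field F] (h2 : (2 : F) ≠ 0) :
    (SymplecticGroup.toSL (Fin 2) F).range.relIndex (signedSymplectic (Fin 2) F) = 2 := by
  have hinv : ∀ {g : SpecialLinearGroup (Fin 2 ⊕ Fin 2) F} {ε : F}, (∀ x y,
      symplecticForm (Fin 2) F ((g : Matrix _ _ F) *ᵥ x) ((g : Matrix _ _ F) *ᵥ y) =
        ε * symplecticForm (Fin 2) F x y) →
      (g ∈ (SymplecticGroup.toSL (Fin 2) F).range ↔ ε = 1) := fun {g ε} h => by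
    rw [SymplecticGroup.mem_range_toSL, mem_symplecticGroup_iff]
    refine ⟨fun hg => ?_, fun hε x y => by rw [h, hε, one_mul]⟩
    obtain ⟨y, hy⟩ := exists_symplecticForm_eq_one (l := Fin 2) (F := F) (x := 1) one_ne_zero
    simpa [hg, hy] using (h 1 y).symm
  set a : SpecialLinearGroup (Fin 2 ⊕ Fin 2) F := ⟨fromBlocks 1 0 0 (-1), by
    rw [det_fromBlocks_zero₂₁]; simp [det_neg]⟩
  have ha : ∀ x y, symplecticForm (Fin 2) F ((a : Matrix _ _ F) *ᵥ x) ((a : Matrix _ _ F) *ᵥ y) =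
      -1 * symplecticForm (Fin 2) F x y := fun x y => by
    have haJ : (a : Matrix _ _ F)ᵀ * J (Fin 2) F * (a : Matrix _ _ F) = -J (Fin 2) F := by
      simp [a, J, fromBlocks_transpose, fromBlocks_multiply, fromBlocks_neg]
    rw [symplecticForm_mulVec, haJ, symplecticForm_apply, neg_mulVec, dotProduct_neg, neg_one_mul]
  refine Subgroup.relIndex_eq_two_iff.2 ⟨a, ⟨-1, by ring, ha⟩, fun b hb => ?_⟩
  obtain ⟨ε, hε, hb⟩ := hb
  have hba : ∀ x y, symplecticForm (Fin 2) F ((↑(b * a) : Matrix _ _ F) *ᵥ x)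
      ((↑(b * a) : Matrix _ _ F) *ᵥ y) = -ε * symplecticForm (Fin 2) F x y := fun x y => by
    rw [Matrix.SpecialLinearGroup.coe_mul, ← mulVec_mulVec, ← mulVec_mulVec, hb, ha]
    ring
  have hne : (-1 : F) ≠ 1 := fun h => h2 (by linear_combination -h)
  rw [hinv hba, hinv hb]
  rcases sq_eq_sq_iff_eq_or_eq_neg.1 (hε.trans (one_pow 2).symm) with rfl | rfl
  · simp [Xor, hne]
  · simp [Xor, hne]

end Index

section Projective

theorem FiniteField.sq_eq_one_of_pow_four_eq_one {F : Type*} [Field F] [Fintype F]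
    (hF : Fintype.card F % 4 = 3) {t : F} (ht : t ^ 4 = 1) : t ^ 2 = 1 := by
  have h : (t ^ 2 - 1) * (t ^ 2 + 1) = 0 := by linear_combination ht
  refine (mul_eq_zero.1 h).elim sub_eq_zero.1 fun h => ?_
  have hsq : IsSquare (-1 : F) := ⟨t, by linear_combination -h⟩
  exact absurd hF (isSquare_neg_one_iff.1 hsq)

variable (F : Type*) [Field F]

/-- The projection of the special linear group on `F² ⊕ F²` onto `PSL₄(F)`. -/
def toPSL4 : SpecialLinearGroup (Fin 2 ⊕ Fin 2) F →* ProjectiveSpecialLinearGroup (Fin 4) F :=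
  (QuotientGroup.mk' _).comp
    (Matrix.SpecialLinearGroup.reindexMulEquiv F (finSumFinEquiv (m := 2) (n := 2))).toMonoidHom

theorem toPSL4_surjective : Function.Surjective (toPSL4 F) :=
  (QuotientGroup.mk'_surjective _).comp (MulEquiv.surjective _)

variable {F}

theorem mem_ker_toPSL4 {g : SpecialLinearGroup (Fin 2 ⊕ Fin 2) F} :
    g ∈ (toPSL4 F).ker ↔ ∃ t : F, (g : Matrix (Fin 2 ⊕ Fin 2) (Fin 2 ⊕ Fin 2) F) = t • 1 := by
  rw [toPSL4, MonoidHom.mem_ker, MonoidHom.comp_apply, ← MonoidHom.mem_ker, QuotientGroup.ker_mk']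
  refine (MulEquivClass.apply_mem_center_iff (Matrix.SpecialLinearGroup.reindexMulEquiv F
    (finSumFinEquiv (m := 2) (n := 2)))).trans (Matrix.SpecialLinearGroup.mem_center_iff.trans ?_)
  simp_rw [scalar_apply, ← smul_one_eq_diagonal]
  refine ⟨fun ⟨t, _, ht⟩ => ⟨t, ht.symm⟩, fun ⟨t, ht⟩ => ⟨t, ?_, ht.symm⟩⟩
  simpa [ht] using g.det_coe

variable [Fintype F]

/-- For `q ≡ 3 (mod 4)`, the group `PSp₄(q).2` is a maximal subgroup of odd index in `PSL₄(q)`. -/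
theorem exists_maximal_odd_index_PSp4_two (hF : Fintype.card F % 4 = 3) :
    ∃ H : Subgroup (ProjectiveSpecialLinearGroup (Fin 4) F), IsCoatom H ∧ Odd H.index ∧
      ∃ N : Subgroup H, N.Normal ∧ N.index = 2 ∧
        Nonempty (N ≃* (symplecticGroup (Fin 2) F ⧸
          Subgroup.center (symplecticGroup (Fin 2) F))) := by
  have hroot : ∀ t : F, t ^ Fintype.card (Fin 2 ⊕ Fin 2) = 1 → t ^ 2 = 1 := fun t ht =>
    FiniteField.sq_eq_one_of_pow_four_eq_one hF (by simpa using ht)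
  have h2 : (2 : F) ≠ 0 := Ring.two_ne_zero fun h => by
    have := FiniteField.even_card_iff_char_two.1 h
    lia
  have hle := range_toSL_le_signedSymplectic (l := Fin 2) (F := F)
  have hker : (toPSL4 F).ker ≤ (SymplecticGroup.toSL (Fin 2) F).range := fun g hg => by
    obtain ⟨t, ht⟩ := mem_ker_toPSL4.1 hg
    rw [SymplecticGroup.mem_range_toSL, ht, smul_one_mem_symplecticGroup_iff]
    exact hroot t (by simpa [ht] using g.det_coe)
  have hrel := relIndex_range_toSL_signedSymplectic h2
  have hindex : ((signedSymplectic (Fin 2) F).map (toPSL4 F)).index =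
      (signedSymplectic (Fin 2) F).index := by
    rw [Subgroup.index_map, MonoidHom.range_eq_top.2 (toPSL4_surjective F), Subgroup.index_top,
      mul_one, sup_eq_left.2 (hker.trans hle)]
  have hcard : 2 * ((signedSymplectic (Fin 2) F).map (toPSL4 F)).index =
      Fintype.card F ^ 2 * (Fintype.card F ^ 3 - 1) := by
    rw [hindex, ← SymplecticGroup.index_range_toSL, ← Subgroup.relIndex_mul_index hle, hrel]
  obtain ⟨k, hk⟩ : ∃ k, Fintype.card F = 4 * k + 3 := ⟨Fintype.card F / 4, by lia⟩
  have hval : ((signedSymplectic (Fin 2) F).map (toPSL4 F)).index =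
      (4 * k + 3) ^ 2 * (2 * (16 * k ^ 3 + 36 * k ^ 2 + 27 * k + 6) + 1) := by
    have h3 : (4 * k + 3) ^ 3 - 1 = 2 * (2 * (16 * k ^ 3 + 36 * k ^ 2 + 27 * k + 6) + 1) := by
      refine Nat.sub_eq_of_eq_add ?_
      ring
    rw [hk, h3] at hcard
    linarith
  refine ⟨(signedSymplectic (Fin 2) F).map (toPSL4 F), ⟨fun htop => ?_, fun K hK => ?_⟩, ?_,
    ((SymplecticGroup.toSL (Fin 2) F).range.map (toPSL4 F)).subgroupOf _, ?_⟩
  · rw [htop, Subgroup.index_top] at hval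
    have := Nat.eq_one_of_mul_eq_one_left hval.symm
    lia
  · have hKcomap : K.comap (toPSL4 F) = ⊤ := by
      refine eq_top_of_not_le_signedSymplectic hroot
        (hle.trans (Subgroup.map_le_iff_le_comap.1 hK.le)) fun h => hK.not_ge ?_
      rw [← Subgroup.map_comap_eq_self_of_surjective (toPSL4_surjective F) K]
      exact Subgroup.map_mono h
    rw [← Subgroup.map_comap_eq_self_of_surjective (toPSL4_surjective F) K, hKcomap,
      Subgroup.map_top_of_surjective _ (toPSL4_surjective F)]
  · rw [hval]
    exact (Odd.pow ⟨2 * k + 1, by ring⟩).mul (odd_two_mul_add_one _)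
  · have hN : (((SymplecticGroup.toSL (Fin 2) F).range.map (toPSL4 F)).subgroupOf
        ((signedSymplectic (Fin 2) F).map (toPSL4 F))).index = 2 := by
      refine (Subgroup.relIndex_map_map _ _ _).trans ?_
      rw [sup_eq_left.2 hker, sup_eq_left.2 (hker.trans hle), hrel]
    refine ⟨Subgroup.normal_of_index_eq_two hN, hN, ⟨?_⟩⟩
    have hcenter : Subgroup.center (symplecticGroup (Fin 2) F) =
        ((toPSL4 F).comp (SymplecticGroup.toSL (Fin 2) F)).ker := by
      ext A
      rw [SymplecticGroup.mem_center_iff, MonoidHom.mem_ker, MonoidHom.comp_apply,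
        ← MonoidHom.mem_ker, mem_ker_toPSL4]
      rfl
    exact (Subgroup.subgroupOfEquivOfLe (Subgroup.map_mono hle)).trans
      ((MulEquiv.subgroupCongr (MonoidHom.map_range _ _)).trans
        ((QuotientGroup.quotientKerEquivRange _).symm.trans
          (QuotientGroup.quotientMulEquivOfEq hcenter).symm))

end Projective

/-- for `q` an odd prime power and `|F| = q`, the group `PSL₄(F)` has a
maximal subgroup `H` of odd index of shape `PSp₄(q).2` (i.e. admitting a normal subgroup
`N` of index `2` with `N ≅ PSp₄(F) = Sp(4, F) ⧸ center`) iff `q ≡ 3 (mod 4)`. -/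
theorem psl4_maximal_odd_index_psp4_2_iff (q : ℕ) (hq_odd : Odd q) (hq_pp : IsPrimePow q)
    (F : Type) [Field F] [Fintype F] (hF : Fintype.card F = q) :
    (∃ H : Subgroup (Matrix.ProjectiveSpecialLinearGroup (Fin 4) F),
        IsCoatom H ∧ Odd H.index ∧
          ∃ N : Subgroup H, N.Normal ∧ N.index = 2 ∧
            Nonempty (N ≃* (Matrix.symplecticGroup (Fin 2) F ⧸
              Subgroup.center (Matrix.symplecticGroup (Fin 2) F)))) ↔
      q % 4 = 3 := by
  refine ⟨fun ⟨H, _, _, N, _, hN, ⟨φ⟩⟩ => ?_, fun h => exists_maximal_odd_index_PSp4_two (hF ▸ h)⟩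
  by_contra h
  have h1 : Fintype.card F % 4 = 1 := by
    obtain ⟨k, rfl⟩ := hq_odd
    lia
  exact not_index_two_PSp4_of_card_mod_four_eq_one h1 hN φ
end

section
/- For natural numbers m and n with m ≤ n, one has (∀ i, Nat.testBit m i = true → Nat.testBit n i = true) if and only if (∀ i, Nat.testBit (n - m) i = true → Nat.testBit n i = true); that is, m ⪯ n if and only if n - m ⪯ n. -/
/-- If every binary digit of `m` is at most that of `n`, then so is every binary digit of
`n - m`: the subtraction involves no borrows. -/
theorem Nat.testBit_of_testBit_sub {m n : ℕ}
    (h : ∀ i, Nat.testBit m i = true → Nat.testBit n i = true) (i : ℕ)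
    (hi : Nat.testBit (n - m) i = true) : Nat.testBit n i = true := by
  induction i generalizing m n with
  | zero =>
    have h0 := h 0
    simp only [Nat.testBit_zero, decide_eq_true_eq] at h0 hi ⊢
    omega
  | succ i ih =>
    have h0 := h 0
    simp only [Nat.testBit_zero, decide_eq_true_eq] at h0
    have hdiv : (n - m) / 2 = n / 2 - m / 2 := by omega
    rw [Nat.testBit_succ, hdiv] at hi
    rw [Nat.testBit_succ]
    refine ih (fun j hj => ?_) hi
    rw [← Nat.testBit_succ] at hj ⊢
    exact h (j + 1) hj

/-- for natural numbers `m ≤ n`, `m ⪯ n` iff `n - m ⪯ n`, where `a ⪯ b`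
means every binary digit of `a` is at most the corresponding binary digit of `b`. -/
theorem testBit_le_iff_sub_testBit_le (m n : ℕ) (h : m ≤ n) :
    (∀ i, Nat.testBit m i = true → Nat.testBit n i = true) ↔
      (∀ i, Nat.testBit (n - m) i = true → Nat.testBit n i = true) := by
  refine ⟨Nat.testBit_of_testBit_sub, fun hsub i hi => ?_⟩
  rw [← Nat.sub_sub_self h] at hi
  exact Nat.testBit_of_testBit_sub hsub i hi
end
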